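/- arXiv:2502.06264 — 4 statements merged into one kernel-verified Lean document; each statement's English description precedes it below -/
import Mathlib

section
/- Let K be an arbitrary field and n ≥ 5. In the flip graph of the polynomial multiplication tensor T_{n,2} there is a path (consisting of flips and reductions) that leads from the standard representation {(a_i, b_j, c_{i+j}) : 0 ≤ i ≤ n, 0 ≤ j ≤ 2} to a representation of length 2n+1. -/
open Polynomial TensorProduct

namespace FlipGraph

variable (K : Type) [Field K]

/-- A triple `(u, v, w)` of polynomials, standing for the rank-one tensor `u ⊗ v ⊗ w`. -/
abbrev Triple := Polynomial K × Polynomial K × Polynomial K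

/-- The rank-one tensor `u ⊗ v ⊗ w` represented by a triple. -/
noncomputable def tensorOf (t : Triple K) :
    TensorProduct K (Polynomial K) (TensorProduct K (Polynomial K) (Polynomial K)) :=
  t.1 ⊗ₜ[K] (t.2.1 ⊗ₜ[K] t.2.2)

/-- The tensor represented by a representation (a multiset of triples). -/
noncomputable def tensorOfRep (S : Multiset (Triple K)) :
    TensorProduct K (Polynomial K) (TensorProduct K (Polynomial K) (Polynomial K)) :=
  (S.map (tensorOf K)).sum

/-- Two representations are equivalent up to rescaling: each triple is replaced by another
triple representing the same rank-one tensor (nonzero scalar factors being moved between the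
three components). Such rescalings are not counted as steps. -/
def ReEq (S S' : Multiset (Triple K)) : Prop :=
  S.map (tensorOf K) = S'.map (tensorOf K)

/-- A flip replaces two triples that agree in one position by two new triples: for a shared
first component and any `l ∈ K`, `(u, v₁, w₁), (u, v₂, w₂) ↦ (u, v₁ − l·v₂, w₁),
(u, v₂, w₂ + l·w₁)`, and analogously when the shared component is the second or the third. -/
def IsFlip (S S' : Multiset (Triple K)) : Prop :=
  ∃ (T : Multiset (Triple K)) (l : K),
    (∃ u v₁ w₁ v₂ w₂, S = (u, v₁, w₁) ::ₘ (u, v₂, w₂) ::ₘ T ∧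
        S' = (u, v₁ - l • v₂, w₁) ::ₘ (u, v₂, w₂ + l • w₁) ::ₘ T) ∨
    (∃ v u₁ w₁ u₂ w₂, S = (u₁, v, w₁) ::ₘ (u₂, v, w₂) ::ₘ T ∧
        S' = (u₁ - l • u₂, v, w₁) ::ₘ (u₂, v, w₂ + l • w₁) ::ₘ T) ∨
    (∃ w u₁ v₁ u₂ v₂, S = (u₁, v₁, w) ::ₘ (u₂, v₂, w) ::ₘ T ∧
        S' = (u₁ - l • u₂, v₁, w) ::ₘ (u₂, v₂ + l • v₁, w) ::ₘ T)

/-- A reduction replaces two triples that agree in two positions by their sum in the remaining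
position, e.g. `(u₁, v, w), (u₂, v, w) ↦ (u₁ + u₂, v, w)`. -/
def IsReduction (S S' : Multiset (Triple K)) : Prop :=
  ∃ T : Multiset (Triple K),
    (∃ u₁ u₂ v w, S = (u₁, v, w) ::ₘ (u₂, v, w) ::ₘ T ∧ S' = (u₁ + u₂, v, w) ::ₘ T) ∨
    (∃ u v₁ v₂ w, S = (u, v₁, w) ::ₘ (u, v₂, w) ::ₘ T ∧ S' = (u, v₁ + v₂, w) ::ₘ T) ∨
    (∃ u v w₁ w₂, S = (u, v, w₁) ::ₘ (u, v, w₂) ::ₘ T ∧ S' = (u, v, w₁ + w₂) ::ₘ T)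

/-- `Path K S S' f r` means that in the flip graph there is a path from representation `S` to
representation `S'` consisting of `f` flips and `r` reductions (interleaved with arbitrarily
many uncounted rescalings). -/
inductive Path : Multiset (Triple K) → Multiset (Triple K) → ℕ → ℕ → Prop
  | refl (S : Multiset (Triple K)) : Path S S 0 0
  | rescale {S S' T : Multiset (Triple K)} {f r : ℕ} :
      ReEq K S S' → Path S' T f r → Path S T f r
  | flip {S S' T : Multiset (Triple K)} {f r : ℕ} :
      IsFlip K S S' → Path S' T f r → Path S T (f + 1) r
  | reduce {S S' T : Multiset (Triple K)} {f r : ℕ} :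
      IsReduction K S S' → Path S' T f r → Path S T f (r + 1)

/-- The standard representation of the polynomial multiplication tensor `T_{n,m}`:
the multiset of triples `(a_i, b_j, c_{i+j})` for `0 ≤ i ≤ n`, `0 ≤ j ≤ m`. -/
noncomputable def stdRep (n m : ℕ) : Multiset (Triple K) :=
  (Finset.range (n + 1) ×ˢ Finset.range (m + 1)).val.map
    fun p => ((X : Polynomial K) ^ p.1, (X : Polynomial K) ^ p.2,
              (X : Polynomial K) ^ (p.1 + p.2))

variable {K}

/-- `T` can be reached from `S` by flips, reductions and rescalings. -/
def Reach (S T : Multiset (Triple K)) : Prop :=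
  ∃ f r, Path K S T f r

theorem Path.trans {S T U : Multiset (Triple K)} {f r f' r' : ℕ} (h : Path K S T f r)
    (h' : Path K T U f' r') : Path K S U (f + f') (r + r') := by
  induction h with
  | refl S => simpa using h'
  | rescale e _ ih => exact .rescale e (ih h')
  | flip e _ ih => rw [Nat.add_right_comm]; exact .flip e (ih h')
  | reduce e _ ih => rw [Nat.add_right_comm]; exact .reduce e (ih h')

theorem ReEq.add_right {S T : Multiset (Triple K)} (h : ReEq K S T) (U : Multiset (Triple K)) :
    ReEq K (S + U) (T + U) := by
  simp only [ReEq, Multiset.map_add] at h ⊢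
  rw [h]

theorem IsFlip.add_right {S T : Multiset (Triple K)} (h : IsFlip K S T)
    (U : Multiset (Triple K)) : IsFlip K (S + U) (T + U) := by
  obtain ⟨V, l, h⟩ := h
  refine ⟨V + U, l, ?_⟩
  rcases h with ⟨x, a, b, c, d, rfl, rfl⟩ | ⟨x, a, b, c, d, rfl, rfl⟩ | ⟨x, a, b, c, d, rfl, rfl⟩
  · exact .inl ⟨x, a, b, c, d, by simp, by simp⟩
  · exact .inr (.inl ⟨x, a, b, c, d, by simp, by simp⟩)
  · exact .inr (.inr ⟨x, a, b, c, d, by simp, by simp⟩)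

theorem IsReduction.add_right {S T : Multiset (Triple K)} (h : IsReduction K S T)
    (U : Multiset (Triple K)) : IsReduction K (S + U) (T + U) := by
  obtain ⟨V, h⟩ := h
  refine ⟨V + U, ?_⟩
  rcases h with ⟨a, b, c, d, rfl, rfl⟩ | ⟨a, b, c, d, rfl, rfl⟩ | ⟨a, b, c, d, rfl, rfl⟩
  · exact .inl ⟨a, b, c, d, by simp, by simp⟩
  · exact .inr (.inl ⟨a, b, c, d, by simp, by simp⟩)
  · exact .inr (.inr ⟨a, b, c, d, by simp, by simp⟩)

theorem Path.add_right {S T : Multiset (Triple K)} {f r : ℕ} (h : Path K S T f r)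
    (U : Multiset (Triple K)) : Path K (S + U) (T + U) f r := by
  induction h with
  | refl S => exact .refl _
  | rescale e _ ih => exact .rescale (e.add_right U) ih
  | flip e _ ih => exact .flip (e.add_right U) ih
  | reduce e _ ih => exact .reduce (e.add_right U) ih

theorem Reach.refl (S : Multiset (Triple K)) : Reach S S :=
  ⟨0, 0, .refl S⟩

theorem Reach.trans {S T U : Multiset (Triple K)} (h : Reach S T) (h' : Reach T U) :
    Reach S U := by
  obtain ⟨f, r, h⟩ := h
  obtain ⟨f', r', h'⟩ := h'
  exact ⟨_, _, h.trans h'⟩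

theorem Reach.add {S T S' T' : Multiset (Triple K)} (h : Reach S T) (h' : Reach S' T') :
    Reach (S + S') (T + T') := by
  obtain ⟨f, r, h⟩ := h
  obtain ⟨f', r', h'⟩ := h'
  refine ⟨f + f', r + r', (h.add_right S').trans ?_⟩
  rw [add_comm T, add_comm T]
  exact h'.add_right T

theorem Reach.cons {S T : Multiset (Triple K)} (t : Triple K) (h : Reach S T) :
    Reach (t ::ₘ S) (t ::ₘ T) := by
  simpa only [Multiset.singleton_add] using (Reach.refl {t}).add h

theorem IsFlip.reach {S T : Multiset (Triple K)} (h : IsFlip K S T) : Reach S T :=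
  ⟨_, _, .flip h (.refl T)⟩

/-- A zero triple can be absorbed by any other triple. -/
theorem reach_of_tensorOf_eq_zero {t : Triple K} (ht : tensorOf K t = 0)
    {S : Multiset (Triple K)} (hS : S ≠ 0) : Reach (t ::ₘ S) S := by
  obtain ⟨⟨u, v, w⟩, hs⟩ := Multiset.exists_mem_of_ne_zero hS
  obtain ⟨S, rfl⟩ := Multiset.exists_cons_of_mem hs
  refine ⟨0, 1, .rescale (S' := (0, v, w) ::ₘ (u, v, w) ::ₘ S) ?_
    (.reduce ⟨S, .inl ⟨0, u, v, w, rfl, rfl⟩⟩ ?_)⟩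
  · have h0 : tensorOf K ((0, v, w) : Triple K) = 0 := by simp [tensorOf]
    simp only [ReEq, Multiset.map_cons, ht, h0]
  · rw [zero_add]
    exact .refl _

/-! ### Representations with integer coefficients

Polynomials with integer coefficients are given by their lists of coefficients, which makes paths
in the flip graph that are defined over `ℤ` checkable by evaluation. -/

/-- A triple of integer coefficient lists. -/
abbrev IntTriple := List ℤ × List ℤ × List ℤ

/-- The coefficientwise combination `v + l * w`. -/
def addMul (l : ℤ) : List ℤ → List ℤ → List ℤ
  | [], w => w.map (l * ·)
  | v, [] => v
  | x :: v, y :: w => (x + l * y) :: addMul l v w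

/-- Move the `i`-th entry of a list to the front. -/
def pull {α : Type} : ℕ → List α → List α
  | 0, l => l
  | _ + 1, [] => []
  | i + 1, x :: l =>
    match pull i l with
    | [] => [x]
    | y :: l' => y :: x :: l'

/-- The position of the shared component in a flip. -/
inductive Axis
  | fst
  | snd
  | thd

/-- Apply a flip to the first two triples of a list if they agree in the given position;
otherwise leave the list unchanged. -/
def flipHead (p : Axis) (l : ℤ) : List IntTriple → List IntTriple
  | (u₁, v₁, w₁) :: (u₂, v₂, w₂) :: s =>
    match p with
    | .fst => if u₁ = u₂ then (u₁, addMul (-l) v₁ v₂, w₁) :: (u₂, v₂, addMul l w₂ w₁) :: s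
        else (u₁, v₁, w₁) :: (u₂, v₂, w₂) :: s
    | .snd => if v₁ = v₂ then (addMul (-l) u₁ u₂, v₁, w₁) :: (u₂, v₂, addMul l w₂ w₁) :: s
        else (u₁, v₁, w₁) :: (u₂, v₂, w₂) :: s
    | .thd => if w₁ = w₂ then (addMul (-l) u₁ u₂, v₁, w₁) :: (u₂, addMul l v₂ v₁, w₂) :: s
        else (u₁, v₁, w₁) :: (u₂, v₂, w₂) :: s
  | s => s

/-- The move `(p, j, i, l)` pulls the `j`-th triple to the front, then the `i`-th one, and then
flips these two along the shared position `p` with factor `l`. -/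
def move (s : List IntTriple) (m : Axis × ℕ × ℕ × ℤ) : List IntTriple :=
  flipHead m.1 m.2.2.2 (pull m.2.2.1 (pull m.2.1 s))

/-- Whether no component of the triple is zero. -/
def IntTriple.nonzero (t : IntTriple) : Bool :=
  t.1.any (· != 0) && t.2.1.any (· != 0) && t.2.2.any (· != 0)

/-- The coefficient list of `X ^ i`, of length `10` when `i < 10`. -/
def monomialCoeffs (i : ℕ) : List ℤ :=
  List.replicate i 0 ++ 1 :: List.replicate (9 - i) 0

/-- The standard representation with `m` rows and three columns. -/
def stdCoeffs (m : ℕ) : List IntTriple :=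
  (List.range m).flatMap fun i => (List.range 3).map fun j =>
    (monomialCoeffs i, monomialCoeffs j, monomialCoeffs (i + j))

variable (K) in
/-- The polynomial with the given coefficient list. -/
noncomputable def ofCoeffs : List ℤ → K[X]
  | [] => 0
  | x :: v => C (x : K) + X * ofCoeffs v

theorem ofCoeffs_map_mul (l : ℤ) (v : List ℤ) :
    ofCoeffs K (v.map (l * ·)) = (l : K) • ofCoeffs K v := by
  induction v with
  | nil => simp [ofCoeffs]
  | cons x v ih => simp [ofCoeffs, ih, smul_eq_C_mul, mul_left_comm]

theorem ofCoeffs_addMul (l : ℤ) (v w : List ℤ) :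
    ofCoeffs K (addMul l v w) = ofCoeffs K v + (l : K) • ofCoeffs K w := by
  induction v generalizing w with
  | nil => simp [addMul, ofCoeffs, ofCoeffs_map_mul]
  | cons x v ih =>
    cases w with
    | nil => simp [addMul, ofCoeffs]
    | cons y w =>
      simp only [addMul, ofCoeffs, ih, smul_eq_C_mul, Int.cast_add, Int.cast_mul, C_add, C_mul]
      ring

theorem ofCoeffs_replicate_zero (n : ℕ) : ofCoeffs K (List.replicate n 0) = 0 := by
  induction n with
  | zero => rfl
  | succ n ih => simp [List.replicate_succ, ofCoeffs, ih]

theorem ofCoeffs_monomialCoeffs (i : ℕ) : ofCoeffs K (monomialCoeffs i) = X ^ i := by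
  unfold monomialCoeffs
  generalize 9 - i = d
  induction i with
  | zero => simp [ofCoeffs, ofCoeffs_replicate_zero]
  | succ i ih => simp [List.replicate_succ, ofCoeffs, ih, pow_succ']

theorem ofCoeffs_eq_zero {v : List ℤ} (h : v.any (· != 0) = false) : ofCoeffs K v = 0 := by
  induction v with
  | nil => rfl
  | cons x v ih =>
    simp only [List.any_cons, Bool.or_eq_false_iff, bne_eq_false_iff_eq] at h
    simp [ofCoeffs, h.1, ih h.2]

variable (K) in
/-- The triple of polynomials with the given coefficients, the first and the third one being
multiplied by `X ^ k`. -/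
noncomputable def toTriple (k : ℕ) (t : IntTriple) : Triple K :=
  (X ^ k * ofCoeffs K t.1, ofCoeffs K t.2.1, X ^ k * ofCoeffs K t.2.2)

variable (K) in
/-- The representation with the given coefficients, shifted by `X ^ k`. -/
noncomputable def toRep (k : ℕ) (s : List IntTriple) : Multiset (Triple K) :=
  (s.map (toTriple K k) : List (Triple K))

theorem toRep_cons (k : ℕ) (t : IntTriple) (s : List IntTriple) :
    toRep K k (t :: s) = toTriple K k t ::ₘ toRep K k s := rfl

theorem pull_perm {α : Type} (i : ℕ) (l : List α) : (pull i l).Perm l := by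
  induction i generalizing l with
  | zero => exact .refl _
  | succ i ih =>
    cases l with
    | nil => exact .refl _
    | cons x l =>
      have h := ih l
      unfold pull
      split
      · next h' => rw [h'] at h; exact h.cons x
      · next y l' h' => rw [h'] at h; exact (List.Perm.swap x y l').trans (h.cons x)

theorem toRep_pull (k i : ℕ) (s : List IntTriple) : toRep K k (pull i s) = toRep K k s :=
  Multiset.coe_eq_coe.2 ((pull_perm i s).map _)

theorem reach_flipHead (k : ℕ) (p : Axis) (l : ℤ) (s : List IntTriple) :
    Reach (toRep K k s) (toRep K k (flipHead p l s)) := by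
  have hsub (u v : List ℤ) : ofCoeffs K (addMul (-l) u v) =
      ofCoeffs K u - (l : K) • ofCoeffs K v := by
    rw [ofCoeffs_addMul, Int.cast_neg, neg_smul, sub_eq_add_neg]
  unfold flipHead
  split
  · next u₁ v₁ w₁ u₂ v₂ w₂ s =>
    split <;> split
    any_goals exact .refl _
    all_goals
      next h =>
      subst h
      refine IsFlip.reach ⟨toRep K k s, (l : K), ?_⟩
      simp only [toRep_cons, toTriple, ofCoeffs_addMul, hsub, mul_add, mul_sub, mul_smul_comm]
      first
        | exact .inl ⟨_, _, _, _, _, rfl, rfl⟩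
        | exact .inr (.inl ⟨_, _, _, _, _, rfl, rfl⟩)
        | exact .inr (.inr ⟨_, _, _, _, _, rfl, rfl⟩)
  · exact .refl _

theorem reach_foldl_move (k : ℕ) (ms : List (Axis × ℕ × ℕ × ℤ)) (s : List IntTriple) :
    Reach (toRep K k s) (toRep K k (ms.foldl move s)) := by
  induction ms generalizing s with
  | nil => exact .refl _
  | cons m ms ih =>
    refine Reach.trans ?_ (ih (move s m))
    simpa only [toRep_pull, move] using
      reach_flipHead (K := K) k m.1 m.2.2.2 (pull m.2.2.1 (pull m.2.1 s))

theorem tensorOf_toTriple_eq_zero (k : ℕ) {t : IntTriple} (h : ¬t.nonzero) :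
    tensorOf K (toTriple K k t) = 0 := by
  simp only [IntTriple.nonzero, Bool.not_eq_true, Bool.and_eq_false_iff] at h
  rcases h with (h | h) | h <;> simp [tensorOf, toTriple, ofCoeffs_eq_zero h]

theorem reach_filter_nonzero (k : ℕ) (s : List IntTriple)
    (hs : s.filter IntTriple.nonzero ≠ []) :
    Reach (toRep K k s) (toRep K k (s.filter IntTriple.nonzero)) := by
  suffices h : ∀ S : Multiset (Triple K), toRep K k (s.filter IntTriple.nonzero) + S ≠ 0 →
      Reach (toRep K k s + S) (toRep K k (s.filter IntTriple.nonzero) + S) by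
    simpa using h 0 (by simpa [toRep] using hs)
  clear hs
  induction s with
  | nil => exact fun S _ => .refl _
  | cons t s ih =>
    intro S hS
    rw [toRep_cons, Multiset.cons_add]
    by_cases ht : t.nonzero
    · rw [List.filter_cons_of_pos ht, toRep_cons, Multiset.cons_add, ← Multiset.add_cons,
        ← Multiset.add_cons]
      exact ih _ (by simp)
    · rw [List.filter_cons_of_neg ht] at hS ⊢
      refine (Reach.cons _ (ih S hS)).trans ?_
      exact reach_of_tensorOf_eq_zero (tensorOf_toTriple_eq_zero k ht) hS

variable (K) in
/-- The part of the standard representation that belongs to the coefficient `a_i`. -/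
noncomputable def row (i : ℕ) : Multiset (Triple K) :=
  (Multiset.range 3).map fun j => (X ^ i, X ^ j, X ^ (i + j))

theorem stdRep_two_eq_sum_row (n : ℕ) : stdRep K n 2 = ∑ i ∈ Finset.range (n + 1), row K i := by
  rw [stdRep, Finset.product_val]
  simp only [SProd.sprod, Multiset.product, Multiset.map_bind, Multiset.map_map]
  rfl

theorem toRep_stdCoeffs (k m : ℕ) :
    toRep K k (stdCoeffs m) = ∑ i ∈ Finset.range m, row K (k + i) := by
  induction m with
  | zero => rfl
  | succ m ih =>
    rw [Finset.sum_range_succ, ← ih]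
    simp only [stdCoeffs, List.range_succ (n := m), List.flatMap_append, toRep, List.map_append,
      ← Multiset.coe_add, List.flatMap_singleton, List.map_map]
    congr 1
    simp only [row, Multiset.range, Multiset.map_coe]
    congr 2
    funext j
    simp [toTriple, ofCoeffs_monomialCoeffs, pow_add, mul_assoc]

/-- If a sequence of moves leaves `c` nonzero triples of the standard representation with `m`
rows, then a representation of length `c` can be reached from any `m` consecutive rows. -/
theorem exists_reach_of_moves (m : ℕ) (ms : List (Axis × ℕ × ℕ × ℤ)) {c : ℕ} (hc : c ≠ 0)
    (h : ((ms.foldl move (stdCoeffs m)).filter IntTriple.nonzero).length = c) (k : ℕ) :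
    ∃ R, Reach (∑ i ∈ Finset.range m, row K (k + i)) R ∧ Multiset.card R = c := by
  refine ⟨toRep K k ((ms.foldl move (stdCoeffs m)).filter IntTriple.nonzero), ?_, ?_⟩
  · rw [← toRep_stdCoeffs]
    refine (reach_foldl_move k ms _).trans (reach_filter_nonzero k _ ?_)
    rintro h'
    exact hc (by rw [← h, h', List.length_nil])
  · simpa [toRep] using h

theorem exists_reach_three_rows (k : ℕ) :
    ∃ R, Reach (∑ i ∈ Finset.range 3, row K (k + i)) R ∧ Multiset.card R = 6 :=
  exists_reach_of_moves 3
   [(.snd, 7, 5, -1), (.snd, 0, 3, 1), (.snd, 1, 2, 1), (.snd, 8, 7, -1), (.fst, 0, 3, -1),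
    (.snd, 5, 8, 1), (.snd, 0, 8, -1), (.snd, 5, 8, 1), (.snd, 0, 6, 1), (.thd, 4, 2, -1),
    (.thd, 4, 8, -1), (.snd, 4, 5, 1), (.snd, 0, 1, -1), (.thd, 3, 2, -1)]
    (by decide) (by decide +kernel) k

theorem exists_reach_six_rows (k : ℕ) :
    ∃ R, Reach (∑ i ∈ Finset.range 6, row K (k + i)) R ∧ Multiset.card R = 11 :=
  exists_reach_of_moves 6
   [(.snd, 0, 9, 1), (.snd, 12, 1, 1), (.snd, 0, 15, 1), (.snd, 12, 5, 1), (.snd, 14, 1, -1),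
    (.snd, 0, 12, 1), (.snd, 1, 2, 1), (.thd, 5, 2, -1), (.snd, 9, 12, 1), (.snd, 1, 8, 1),
    (.snd, 11, 7, 1), (.snd, 1, 8, 1), (.thd, 4, 2, 1), (.snd, 10, 10, 1), (.snd, 6, 1, 1),
    (.snd, 0, 1, -1), (.snd, 12, 14, 1), (.snd, 17, 1, 1), (.snd, 0, 2, -1), (.snd, 1, 15, -1),
    (.thd, 5, 2, -1), (.snd, 6, 11, 1), (.snd, 7, 1, 1), (.snd, 0, 1, -1), (.snd, 11, 17, 1),
    (.snd, 0, 1, -1), (.snd, 1, 12, -1), (.snd, 1, 15, -1), (.thd, 5, 2, -1), (.snd, 9, 16, 1),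
    (.snd, 17, 1, -1), (.snd, 0, 12, -1), (.snd, 1, 3, -1), (.thd, 5, 2, -1), (.snd, 4, 4, 1),
    (.snd, 0, 4, 1), (.thd, 9, 2, -1), (.snd, 7, 9, 1), (.snd, 1, 9, 1), (.snd, 5, 13, 1),
    (.snd, 7, 1, -2), (.snd, 0, 2, 1), (.snd, 1, 2, 1), (.thd, 4, 2, 1)]
    (by decide) (by decide +kernel) k

theorem exists_reach_seven_rows (k : ℕ) :
    ∃ R, Reach (∑ i ∈ Finset.range 7, row K (k + i)) R ∧ Multiset.card R = 13 :=
  exists_reach_of_moves 7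
   [(.snd, 2, 8, 1), (.snd, 11, 1, 1), (.snd, 17, 1, 1), (.snd, 20, 1, -1), (.snd, 0, 9, 1),
    (.snd, 1, 3, -1), (.snd, 6, 10, 1), (.snd, 12, 1, 1), (.snd, 17, 1, 1), (.snd, 19, 1, -1),
    (.fst, 0, 6, 1), (.snd, 16, 5, 1), (.snd, 4, 1, 1), (.snd, 0, 4, 1), (.snd, 1, 3, -1),
    (.snd, 1, 5, -1), (.snd, 1, 4, -1), (.snd, 17, 17, 1), (.snd, 20, 1, 1), (.snd, 0, 2, -1),
    (.snd, 1, 20, -1), (.snd, 1, 3, -1), (.thd, 5, 2, 1), (.snd, 12, 15, 1), (.snd, 20, 1, -1),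
    (.snd, 19, 20, 1), (.snd, 8, 1, 1), (.fst, 0, 3, 1), (.snd, 20, 14, 1), (.snd, 14, 1, -1),
    (.snd, 0, 1, 1), (.snd, 20, 5, 1), (.thd, 3, 1, 1), (.snd, 8, 9, 1), (.thd, 3, 1, -1),
    (.snd, 14, 6, 1), (.snd, 13, 10, 1), (.thd, 3, 2, 1), (.snd, 20, 7, 1), (.snd, 0, 19, 1),
    (.thd, 4, 2, -1), (.snd, 11, 7, 1), (.snd, 17, 1, 1), (.thd, 0, 5, -1), (.snd, 3, 19, -1),
    (.snd, 0, 1, 1), (.snd, 15, 14, -1), (.thd, 3, 1, 1), (.snd, 18, 12, 1), (.snd, 20, 12, 1),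
    (.thd, 3, 1, 1)]
    (by decide) (by decide +kernel) k

theorem exists_reach_eight_rows (k : ℕ) :
    ∃ R, Reach (∑ i ∈ Finset.range 8, row K (k + i)) R ∧ Multiset.card R = 15 :=
  exists_reach_of_moves 8
   [(.snd, 13, 11, 1), (.snd, 16, 1, -1), (.snd, 19, 1, 1), (.snd, 22, 1, -1), (.snd, 0, 12, -1),
    (.snd, 1, 5, -1), (.snd, 15, 17, 1), (.snd, 19, 1, 1), (.snd, 21, 1, -1), (.snd, 23, 1, 1),
    (.snd, 0, 16, -1), (.snd, 1, 5, -1), (.thd, 7, 2, -1), (.snd, 5, 5, 1), (.snd, 0, 4, -1),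
    (.snd, 1, 6, -1), (.snd, 1, 3, -1), (.snd, 10, 10, 1), (.fst, 0, 3, -1), (.snd, 22, 22, 1),
    (.snd, 0, 23, -1), (.snd, 5, 14, 1), (.snd, 0, 1, -2), (.snd, 1, 6, 1), (.thd, 4, 2, 1),
    (.snd, 8, 8, 1), (.snd, 0, 9, 1), (.snd, 1, 2, -1), (.thd, 4, 2, -1), (.snd, 20, 16, 1),
    (.snd, 0, 1, -1), (.snd, 1, 22, 1), (.snd, 1, 11, 1), (.snd, 19, 22, 1), (.snd, 0, 1, -1),
    (.snd, 1, 17, 1), (.snd, 1, 10, 1), (.thd, 5, 2, -1), (.snd, 21, 7, 1), (.snd, 23, 1, 1),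
    (.snd, 16, 1, -1), (.snd, 22, 22, 1), (.snd, 23, 1, 1), (.thd, 3, 1, 1), (.thd, 1, 10, -1),
    (.snd, 6, 12, 1), (.thd, 0, 11, -1), (.snd, 13, 10, -1), (.snd, 10, 1, 1), (.snd, 0, 5, -1),
    (.snd, 1, 2, -1), (.snd, 9, 10, -1), (.snd, 19, 1, 1), (.snd, 19, 1, 1), (.snd, 0, 23, -2),
    (.snd, 1, 3, -2), (.snd, 1, 3, 1), (.thd, 6, 2, 1), (.snd, 6, 7, 1), (.snd, 4, 5, -1),
    (.snd, 0, 6, 2), (.snd, 1, 2, -1), (.thd, 4, 2, 1)]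
    (by decide) (by decide +kernel) k

theorem exists_reach_rows (n : ℕ) (hn : 5 ≤ n) :
    ∃ R, Reach (∑ i ∈ Finset.range (n + 1), row K i) R ∧ Multiset.card R = 2 * n + 1 := by
  induction n using Nat.strong_induction_on with
  | _ n ih =>
    rcases Nat.lt_or_ge n 8 with h | h
    · obtain rfl | rfl | rfl : n = 5 ∨ n = 6 ∨ n = 7 := by omega
      · simpa using exists_reach_six_rows (K := K) 0
      · simpa using exists_reach_seven_rows (K := K) 0
      · simpa using exists_reach_eight_rows (K := K) 0
    · obtain ⟨m, rfl⟩ := Nat.exists_eq_add_of_le' (show 3 ≤ n by omega)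
      obtain ⟨R, hR, hcard⟩ := ih m (by omega) (by omega)
      obtain ⟨R', hR', hcard'⟩ := exists_reach_three_rows (K := K) (m + 1)
      refine ⟨R + R', ?_, by rw [Multiset.card_add, hcard, hcard']; ring⟩
      rw [Nat.add_right_comm, Finset.sum_range_add]
      exact hR.add hR'

end FlipGraph

open FlipGraph

/-- Let `K` be an arbitrary field and `n ≥ 5`.  In the flip graph of the
polynomial multiplication tensor `T_{n,2}` there is a path (consisting of flips and
reductions) from the standard representation to a representation of length `2n+1`. -/
theorem path_to_short_rep_deg_two (K : Type) [Field K] (n : ℕ) (hn : 5 ≤ n) :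
    ∃ (R : Multiset (Triple K)) (f r : ℕ),
      Path K (stdRep K n 2) R f r ∧ Multiset.card R = 2 * n + 1 := by
  obtain ⟨R, ⟨f, r, h⟩, hcard⟩ := exists_reach_rows (K := K) n hn
  rw [← stdRep_two_eq_sum_row] at h
  exact ⟨R, f, r, h, hcard⟩
end

section
/- Let K be an arbitrary field and n ≥ 5. Then the rank of the polynomial multiplication tensor T_{n,2} over K is at most 2n+1, i.e. there exist u_ℓ ∈ K[x] of degree ≤ n, v_ℓ ∈ K[x] of degree ≤ 2, w_ℓ ∈ K[x] of degree ≤ n+2, ℓ = 1, …, 2n+1, with T_{n,2} = ∑_ℓ u_ℓ ⊗ v_ℓ ⊗ w_ℓ. -/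
open Polynomial TensorProduct

section MulTensor

universe u

variable (R : Type u) [CommRing R]

/-- The tensor of the multiplication of polynomials of degree at most `n` by polynomials of degree
at most `2`. -/
noncomputable def mulTensor (n : ℕ) : R[X] ⊗[R] (R[X] ⊗[R] R[X]) :=
  ∑ i ∈ Finset.range (n + 1), ∑ j ∈ Finset.range 3,
    ((X : R[X]) ^ i) ⊗ₜ[R] (((X : R[X]) ^ j) ⊗ₜ[R] ((X : R[X]) ^ (i + j)))

/-- `mulTensor R n` has a representation of length `r` respecting the degree bounds. -/
def MulTensorRankLE (n r : ℕ) : Prop :=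
  ∃ L : List (R[X] × R[X] × R[X]), L.length = r ∧
    (∀ t ∈ L, t.1.degree ≤ n ∧ t.2.1.degree ≤ (2 : ℕ) ∧ t.2.2.degree ≤ (n + 2 : ℕ)) ∧
    (L.map fun t ↦ t.1 ⊗ₜ[R] (t.2.1 ⊗ₜ[R] t.2.2)).sum = mulTensor R n

variable {R}

theorem MulTensorRankLE.exists_fin {n r : ℕ} (h : MulTensorRankLE R n r) :
    ∃ u v w : Fin r → R[X],
      (∀ l, (u l).degree ≤ n) ∧ (∀ l, (v l).degree ≤ (2 : ℕ)) ∧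
      (∀ l, (w l).degree ≤ (n + 2 : ℕ)) ∧
      ∑ l, u l ⊗ₜ[R] (v l ⊗ₜ[R] w l) = mulTensor R n := by
  obtain ⟨L, rfl, hdeg, hsum⟩ := h
  refine ⟨fun l ↦ (L.get l).1, fun l ↦ (L.get l).2.1, fun l ↦ (L.get l).2.2,
    fun l ↦ (hdeg _ (L.get_mem l)).1, fun l ↦ (hdeg _ (L.get_mem l)).2.1,
    fun l ↦ (hdeg _ (L.get_mem l)).2.2, ?_⟩
  rw [← hsum]
  exact Fin.sum_univ_fun_getElem L fun t ↦ t.1 ⊗ₜ[R] (t.2.1 ⊗ₜ[R] t.2.2)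

variable (R) in
/-- Multiplication of the first and the third tensor factor by `X ^ k`. -/
noncomputable def shiftTensor (k : ℕ) :
    R[X] ⊗[R] (R[X] ⊗[R] R[X]) →ₗ[R] R[X] ⊗[R] (R[X] ⊗[R] R[X]) :=
  TensorProduct.map (LinearMap.mulLeft R (X ^ k))
    (TensorProduct.map LinearMap.id (LinearMap.mulLeft R (X ^ k)))

theorem shiftTensor_tmul (k : ℕ) (p q s : R[X]) :
    shiftTensor R k (p ⊗ₜ[R] (q ⊗ₜ[R] s)) = (X ^ k * p) ⊗ₜ[R] (q ⊗ₜ[R] (X ^ k * s)) :=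
  rfl

theorem mulTensor_add_add_one (n m : ℕ) :
    mulTensor R (n + m + 1) = mulTensor R n + shiftTensor R (n + 1) (mulTensor R m) := by
  simp only [mulTensor, map_sum, shiftTensor_tmul, ← pow_add]
  rw [show n + m + 1 + 1 = (n + 1) + (m + 1) by ring, Finset.sum_range_add]
  simp only [add_assoc]

theorem degree_X_pow_mul_le {p : R[X]} {k d e : ℕ} (hp : p.degree ≤ d) (h : k + d = e) :
    degree ((X : R[X]) ^ k * p) ≤ (e : WithBot ℕ) := by
  subst h
  refine (degree_mul_le _ _).trans ?_
  push_cast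
  exact add_le_add (degree_X_pow_le k) hp

/-- Splitting the first factor into its low and its high part adds the lengths. -/
theorem MulTensorRankLE.add_add_one {n m r s : ℕ} (hn : MulTensorRankLE R n r)
    (hm : MulTensorRankLE R m s) : MulTensorRankLE R (n + m + 1) (r + s) := by
  obtain ⟨L, rfl, hL, hLsum⟩ := hn
  obtain ⟨M, rfl, hM, hMsum⟩ := hm
  refine ⟨L ++ M.map fun t ↦ (X ^ (n + 1) * t.1, t.2.1, X ^ (n + 1) * t.2.2), by simp, ?_, ?_⟩
  · intro t ht
    rcases List.mem_append.1 ht with ht | ht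
    · obtain ⟨h₁, h₂, h₃⟩ := hL t ht
      exact ⟨h₁.trans (by exact_mod_cast (by omega : n ≤ n + m + 1)), h₂,
        h₃.trans (by exact_mod_cast (by omega : n + 2 ≤ n + m + 1 + 2))⟩
    · obtain ⟨t, hmem, rfl⟩ := List.mem_map.1 ht
      obtain ⟨h₁, h₂, h₃⟩ := hM t hmem
      exact ⟨degree_X_pow_mul_le h₁ (by ring), h₂, degree_X_pow_mul_le h₃ (by ring)⟩
  · rw [mulTensor_add_add_one, ← hLsum, ← hMsum, map_list_sum]
    simp [Function.comp_def, shiftTensor_tmul]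

/-- Pure tensors of polynomials are products of polynomials in three commuting elements. -/
theorem exists_tmul_tmul_eq_aeval :
    ∃ a b c : R[X] ⊗[R] (R[X] ⊗[R] R[X]), ∀ p q s : R[X],
      p ⊗ₜ[R] (q ⊗ₜ[R] s) = aeval a p * aeval b q * aeval c s := by
  refine ⟨X ⊗ₜ (1 ⊗ₜ 1), 1 ⊗ₜ (X ⊗ₜ 1), 1 ⊗ₜ (1 ⊗ₜ X), fun p q s ↦ ?_⟩
  have h₁ := aeval_algHom_apply
    (Algebra.TensorProduct.includeLeft : R[X] →ₐ[R] R[X] ⊗[R] (R[X] ⊗[R] R[X])) X p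
  have h₂ := aeval_algHom_apply
    ((Algebra.TensorProduct.includeRight : _ →ₐ[R] R[X] ⊗[R] (R[X] ⊗[R] R[X])).comp
      (Algebra.TensorProduct.includeLeft : R[X] →ₐ[R] R[X] ⊗[R] R[X])) X q
  have h₃ := aeval_algHom_apply
    ((Algebra.TensorProduct.includeRight : _ →ₐ[R] R[X] ⊗[R] (R[X] ⊗[R] R[X])).comp
      (Algebra.TensorProduct.includeRight : R[X] →ₐ[R] R[X] ⊗[R] R[X])) X s
  simp only [Algebra.TensorProduct.includeLeft_apply, Algebra.TensorProduct.includeRight_apply,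
    Algebra.TensorProduct.one_def, AlgHom.comp_apply, aeval_X_left_apply] at h₁ h₂ h₃
  rw [h₁, h₂, h₃]
  simp

/-- An identity between polynomials in three commuting variables gives a representation. -/
theorem MulTensorRankLE.of_aeval {n : ℕ} (L : List (R[X] × R[X] × R[X]))
    (hdeg : ∀ t ∈ L, t.1.degree ≤ n ∧ t.2.1.degree ≤ (2 : ℕ) ∧ t.2.2.degree ≤ (n + 2 : ℕ))
    (hsum : ∀ (A : Type u) [CommRing A] [Algebra R A] (a b c : A),
      (L.map fun t ↦ aeval a t.1 * aeval b t.2.1 * aeval c t.2.2).sum =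
        ∑ i ∈ Finset.range (n + 1), ∑ j ∈ Finset.range 3, a ^ i * b ^ j * c ^ (i + j)) :
    MulTensorRankLE R n L.length := by
  refine ⟨L, rfl, hdeg, ?_⟩
  obtain ⟨a, b, c, habc⟩ := exists_tmul_tmul_eq_aeval (R := R)
  simp only [mulTensor, habc, aeval_X_pow]
  exact hsum _ a b c

variable (R)

theorem mulTensorRankLE_two : MulTensorRankLE R 2 6 := by
  refine MulTensorRankLE.of_aeval [
    (1, 1, 1 - X - X ^ 2),
    (X, X, -X + X ^ 2 - X ^ 3),
    (X ^ 2, X ^ 2, -X ^ 2 - X ^ 3 + X ^ 4),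
    (1 + X, 1 + X, X),
    (1 + X ^ 2, 1 + X ^ 2, X ^ 2),
    (X + X ^ 2, X + X ^ 2, X ^ 3)] ?_ fun A _ _ a b c ↦ ?_
  · simp only [List.forall_mem_cons, List.not_mem_nil, false_imp_iff, implies_true, and_true]
    repeat' apply And.intro
    all_goals compute_degree!
  · simp only [List.map_cons, List.map_nil, List.sum_cons, List.sum_nil,
      Finset.sum_range_succ, Finset.sum_range_zero, map_add, map_sub, map_neg, map_pow, map_one,
      aeval_X]
    ring

theorem mulTensorRankLE_five : MulTensorRankLE R 5 11 := by
  refine MulTensorRankLE.of_aeval [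
    (1 + X - X ^ 2 - X ^ 3 + X ^ 4 + X ^ 5, 1 + X - X ^ 2, -X ^ 2 - X ^ 3 - X ^ 4),
    (1 + X - X ^ 3 + X ^ 4, 1 + X, X + X ^ 2 + X ^ 3 + X ^ 4),
    (1 - X ^ 2 + X ^ 4, 1 - X ^ 2, X ^ 3 + X ^ 4),
    (X ^ 3 - X ^ 4 - X ^ 5, 1 - X ^ 2, -X ^ 2 - X ^ 3 - X ^ 4 - X ^ 5),
    (1 - X ^ 3 + X ^ 4, 1, 1 - X - X ^ 3 - X ^ 4),
    (X ^ 3 - X ^ 4, 1, 1 + X ^ 2 + X ^ 3 + X ^ 5),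
    (X - X ^ 2 + X ^ 5, X - X ^ 2, X ^ 2 + X ^ 4),
    (X ^ 4, X + X ^ 2, X ^ 3 + X ^ 4 + X ^ 5 + X ^ 6),
    (X - X ^ 3 + X ^ 4, X, -X - X ^ 3 - X ^ 4 - X ^ 6),
    (X - X ^ 3 + X ^ 5, X, X ^ 3 + X ^ 6),
    (X ^ 5, X ^ 2, X ^ 2 + X ^ 4 + X ^ 5 + X ^ 7)] ?_ fun A _ _ a b c ↦ ?_
  · simp only [List.forall_mem_cons, List.not_mem_nil, false_imp_iff, implies_true, and_true]
    repeat' apply And.intro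
    all_goals compute_degree!
  · simp only [List.map_cons, List.map_nil, List.sum_cons, List.sum_nil,
      Finset.sum_range_succ, Finset.sum_range_zero, map_add, map_sub, map_neg, map_pow, map_one,
      aeval_X]
    ring

theorem mulTensorRankLE_six : MulTensorRankLE R 6 13 := by
  refine MulTensorRankLE.of_aeval [
    (1 - X - X ^ 2 + X ^ 3 + X ^ 4 - X ^ 5 - X ^ 6, 1 - X - X ^ 2, X ^ 4 - X ^ 5 + X ^ 6),
    (1 - X, 1 - X, -X + X ^ 5),
    (X + X ^ 2 - X ^ 3 + X ^ 5 + X ^ 6, 1 - X, -X ^ 3 + X ^ 4 - X ^ 5 + X ^ 6),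
    (1 + X + X ^ 5 + X ^ 6, 1 - X ^ 2, -X ^ 2 + X ^ 6),
    (1 - X ^ 2 + X ^ 4 - X ^ 6, 1 - X ^ 2, X ^ 5 - X ^ 6),
    (1, 1, 1 + X + X ^ 2 - X ^ 4 - X ^ 5 - X ^ 6),
    (X + X ^ 2 + X ^ 5 + X ^ 6, 1, X ^ 2 + X ^ 3 + X ^ 5 - X ^ 6),
    (1 + X ^ 3 + X ^ 4, X + X ^ 2, X ^ 4 + X ^ 6),
    (X + X ^ 6, X - X ^ 2, -X ^ 3 + X ^ 7),
    (X + X ^ 3 - X ^ 5, X, X ^ 3 - X ^ 6),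
    (X, X, X + X ^ 2 - X ^ 3 - X ^ 5 + X ^ 6 - X ^ 7),
    (X + X ^ 5 + X ^ 6, X ^ 2, -X ^ 2 - X ^ 3 - X ^ 4 + X ^ 6 + X ^ 7 + X ^ 8),
    (X + X ^ 5, X ^ 2, X ^ 3 + X ^ 5 - X ^ 6 - X ^ 8)] ?_ fun A _ _ a b c ↦ ?_
  · simp only [List.forall_mem_cons, List.not_mem_nil, false_imp_iff, implies_true, and_true]
    repeat' apply And.intro
    all_goals compute_degree!
  · simp only [List.map_cons, List.map_nil, List.sum_cons, List.sum_nil,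
      Finset.sum_range_succ, Finset.sum_range_zero, map_add, map_sub, map_neg, map_pow, map_one,
      aeval_X]
    ring

theorem mulTensorRankLE_seven : MulTensorRankLE R 7 15 := by
  refine MulTensorRankLE.of_aeval [
    (1 + X + X ^ 2 + X ^ 3 + X ^ 5 + X ^ 6, 1 + X + X ^ 2, X ^ 3),
    (X ^ 4 + X ^ 7, 1 + X + X ^ 2, -X ^ 2 + X ^ 4 + X ^ 6),
    (1 - X - X ^ 5, 1 - X, -X + X ^ 3),
    (X ^ 4 - X ^ 5 - X ^ 6 + X ^ 7, 1 + X, X ^ 2 - X ^ 6),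
    (1 + X ^ 2 + X ^ 5 + X ^ 6, 1 + X ^ 2, X ^ 2 - X ^ 3),
    (X ^ 5 + X ^ 7, 1 + X ^ 2, -X ^ 4 + X ^ 7),
    (1 - X ^ 5, 1, 1 + X - X ^ 2 - X ^ 3),
    (X ^ 5, 1, 1 - X ^ 2 + X ^ 4 + X ^ 5 - X ^ 6 - X ^ 7),
    (X ^ 3 + X ^ 6 + X ^ 7, X + X ^ 2, -X ^ 4 + X ^ 8),
    (X ^ 3, X + X ^ 2, -X ^ 3 + X ^ 4 + X ^ 5 - X ^ 8),
    (X + X ^ 3 - X ^ 4 + X ^ 5 + X ^ 6, X, X ^ 4 - X ^ 5),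
    (X + X ^ 5 + X ^ 6, X, X ^ 2 - X ^ 3 + X ^ 5 - X ^ 6 + X ^ 7 - X ^ 8),
    (X + X ^ 5, X, X - X ^ 3 - X ^ 4 + X ^ 6 - X ^ 7 + X ^ 8),
    (X ^ 2 - X ^ 4 + X ^ 5 + X ^ 6, X ^ 2, -X ^ 2 + X ^ 4),
    (X ^ 7, X ^ 2, X ^ 2 + X ^ 4 - X ^ 6 - X ^ 7 - X ^ 8 + X ^ 9)] ?_ fun A _ _ a b c ↦ ?_
  · simp only [List.forall_mem_cons, List.not_mem_nil, false_imp_iff, implies_true, and_true]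
    repeat' apply And.intro
    all_goals compute_degree!
  · simp only [List.map_cons, List.map_nil, List.sum_cons, List.sum_nil,
      Finset.sum_range_succ, Finset.sum_range_zero, map_add, map_sub, map_neg, map_pow, map_one,
      aeval_X]
    ring

theorem mulTensorRankLE_two_mul_add_one (n : ℕ) (hn : 5 ≤ n) :
    MulTensorRankLE R n (2 * n + 1) := by
  induction n using Nat.strong_induction_on with
  | _ n ih =>
    obtain rfl | rfl | rfl | h : n = 5 ∨ n = 6 ∨ n = 7 ∨ 8 ≤ n := by omega
    · exact mulTensorRankLE_five R
    · exact mulTensorRankLE_six R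
    · exact mulTensorRankLE_seven R
    · obtain ⟨k, rfl⟩ := Nat.exists_eq_add_of_le' h
      exact (ih (k + 5) (by omega) (by omega)).add_add_one (mulTensorRankLE_two R)

end MulTensor

/-- Let `K` be an arbitrary field and `n ≥ 5`.  Then the rank of the
polynomial multiplication tensor `T_{n,2}` over `K` is at most `2n+1`: there exist
`u_ℓ` of degree `≤ n`, `v_ℓ` of degree `≤ 2`, `w_ℓ` of degree `≤ n+2`, `ℓ = 1, …, 2n+1`,
with `T_{n,2} = ∑_ℓ u_ℓ ⊗ v_ℓ ⊗ w_ℓ`. -/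
theorem mulTensor_deg_two_rank_le (K : Type) [Field K] (n : ℕ) (hn : 5 ≤ n) :
    ∃ u v w : Fin (2 * n + 1) → Polynomial K,
      (∀ l, (u l).degree ≤ (n : ℕ)) ∧
      (∀ l, (v l).degree ≤ (2 : ℕ)) ∧
      (∀ l, (w l).degree ≤ ((n + 2 : ℕ))) ∧
      ∑ l, (u l) ⊗ₜ[K] ((v l) ⊗ₜ[K] (w l))
        = ∑ i ∈ Finset.range (n + 1), ∑ j ∈ Finset.range 3,
            ((X : Polynomial K) ^ i) ⊗ₜ[K]
              (((X : Polynomial K) ^ j) ⊗ₜ[K] ((X : Polynomial K) ^ (i + j))) := by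
  exact (mulTensorRankLE_two_mul_add_one K n hn).exists_fin
end

section
/- Let K = Z_2 be the field with two elements. The rank of the polynomial multiplication tensor T_{n,m} over K equals 3 for (n,m) = (1,1), 5 for (1,2), 6 for (1,3), 8 for (1,4), 9 for (1,5), 6 for (2,2), 8 for (2,3), 10 for (2,4), and 9 for (3,3). -/
open Polynomial TensorProduct

/-- The rank of the polynomial multiplication tensor `T_{n,m}` over the field `K`: the least
`r` such that `T_{n,m} = ∑_{ℓ=1}^r u_ℓ ⊗ v_ℓ ⊗ w_ℓ` for polynomials with `deg u_ℓ ≤ n`,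
`deg v_ℓ ≤ m`, `deg w_ℓ ≤ n+m`. -/
noncomputable def polyMulRank (K : Type) [Field K] (n m : ℕ) : ℕ :=
  sInf {r : ℕ | ∃ u v w : Fin r → Polynomial K,
    (∀ l, (u l).degree ≤ (n : ℕ)) ∧
    (∀ l, (v l).degree ≤ (m : ℕ)) ∧
    (∀ l, (w l).degree ≤ ((n + m : ℕ))) ∧
    ∑ l, (u l) ⊗ₜ[K] ((v l) ⊗ₜ[K] (w l))
      = ∑ i ∈ Finset.range (n + 1), ∑ j ∈ Finset.range (m + 1),
          ((X : Polynomial K) ^ i) ⊗ₜ[K]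
            (((X : Polynomial K) ^ j) ⊗ₜ[K] ((X : Polynomial K) ^ (i + j)))}

/-- Coefficients of the product of the polynomials with coefficient vectors `p` and `q`. -/
def coeffMul {K : Type} [Field K] {n m : ℕ} (p : Fin (n + 1) → K) (q : Fin (m + 1) → K) :
    Fin (n + m + 1) → K :=
  fun k => ∑ i : Fin (n + 1), ∑ j : Fin (m + 1), if (i : ℕ) + j = k then p i * q j else 0

/-- The coordinates `U`, `V`, `W` of a length `r` representation of `T_{n,m}`. -/
def IsMulScheme {K : Type} [Field K] {n m r : ℕ} (U : Fin r → Fin (n + 1) → K)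
    (V : Fin r → Fin (m + 1) → K) (W : Fin r → Fin (n + m + 1) → K) : Prop :=
  ∀ i j k, ∑ l, U l i * V l j * W l k = if (i : ℕ) + j = k then 1 else 0

instance {K : Type} [Field K] [DecidableEq K] {n m r : ℕ} (U : Fin r → Fin (n + 1) → K)
    (V : Fin r → Fin (m + 1) → K) (W : Fin r → Fin (n + m + 1) → K) :
    Decidable (IsMulScheme U V W) :=
  inferInstanceAs (Decidable (∀ _ _ _, _ = _))

section General

variable {K : Type} [Field K] {n m r : ℕ}

theorem ofFn_coeffMul [DecidableEq K] (p : Fin (n + 1) → K) (q : Fin (m + 1) → K) :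
    ofFn (n + m + 1) (coeffMul p q) = ofFn (n + 1) p * ofFn (m + 1) q := by
  have hsum : ∀ i : Fin (n + 1), ∀ j : Fin (m + 1),
      monomial ((i : ℕ) + j) (p i * q j) = ∑ k : Fin (n + m + 1),
        monomial (k : ℕ) (if (i : ℕ) + j = k then p i * q j else 0) := by
    intro i j
    rw [Finset.sum_eq_single (⟨i + j, by omega⟩ : Fin (n + m + 1))]
    · simp
    · intro k _ hk
      rw [if_neg (fun h => hk (Fin.ext h.symm)), map_zero]
    · simp
  simp only [ofFn_eq_sum_monomial, coeffMul, Finset.sum_mul_sum, monomial_mul_monomial, hsum,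
    map_sum]
  rw [Finset.sum_comm]
  exact Finset.sum_congr rfl fun i _ => Finset.sum_comm

theorem coeffMul_eq_zero {p : Fin (n + 1) → K} {q : Fin (m + 1) → K} (hp : p ≠ 0)
    (h : coeffMul p q = 0) : q = 0 := by
  classical
  have hmul := ofFn_coeffMul p q
  rw [h, map_zero, eq_comm, mul_eq_zero] at hmul
  rcases hmul with hmul | hmul
  · exact absurd (injective_ofFn _ (hmul.trans (map_zero _).symm)) hp
  · exact injective_ofFn _ (hmul.trans (map_zero _).symm)

/-- Representations of `T_{n,m}` by polynomials amount to coordinate schemes. -/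
theorem exists_isMulScheme_iff :
    (∃ u v w : Fin r → K[X],
      (∀ l, (u l).degree ≤ (n : ℕ)) ∧ (∀ l, (v l).degree ≤ (m : ℕ)) ∧
      (∀ l, (w l).degree ≤ ((n + m : ℕ))) ∧
      ∑ l, (u l) ⊗ₜ[K] ((v l) ⊗ₜ[K] (w l))
        = ∑ i ∈ Finset.range (n + 1), ∑ j ∈ Finset.range (m + 1),
            ((X : K[X]) ^ i) ⊗ₜ[K] (((X : K[X]) ^ j) ⊗ₜ[K] ((X : K[X]) ^ (i + j)))) ↔
    ∃ (U : Fin r → Fin (n + 1) → K) (V : Fin r → Fin (m + 1) → K)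
      (W : Fin r → Fin (n + m + 1) → K), IsMulScheme U V W := by
  classical
  constructor
  · rintro ⟨u, v, w, -, -, -, h⟩
    refine ⟨fun l i => (u l).coeff i, fun l j => (v l).coeff j, fun l k => (w l).coeff k, ?_⟩
    intro i j k
    have hc := congrArg (LinearMap.mul' K K ∘ₗ TensorProduct.map (lcoeff K i)
      (LinearMap.mul' K K ∘ₗ TensorProduct.map (lcoeff K j) (lcoeff K k))) h
    simp only [map_sum, LinearMap.comp_apply, TensorProduct.map_tmul, LinearMap.mul'_apply,
      lcoeff_apply, coeff_X_pow] at hc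
    simp only [mul_assoc, hc]
    rw [Finset.sum_eq_single (i : ℕ), Finset.sum_eq_single (j : ℕ)]
    · simp [eq_comm]
    · intro b _ hb
      simp [hb.symm]
    · intro hj
      exact absurd (Finset.mem_range.mpr j.2) hj
    · intro b _ hb
      simp [hb.symm]
    · intro hi
      exact absurd (Finset.mem_range.mpr i.2) hi
  · rintro ⟨U, V, W, h⟩
    have hdeg : ∀ (d : ℕ) (f : Fin (d + 1) → K), (ofFn (d + 1) f).degree ≤ (d : ℕ) := by
      intro d f
      exact degree_le_of_natDegree_le (Nat.le_of_lt_succ (ofFn_natDegree_lt (by omega) f))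
    refine ⟨fun l => ofFn _ (U l), fun l => ofFn _ (V l), fun l => ofFn _ (W l),
      fun l => hdeg _ _, fun l => hdeg _ _, fun l => hdeg _ _, ?_⟩
    have hX : ∀ (d : ℕ) (f : Fin (d + 1) → K),
        ofFn (d + 1) f = ∑ i : Fin (d + 1), f i • (X : K[X]) ^ (i : ℕ) := by
      intro d f
      simp [ofFn_eq_sum_monomial, smul_X_eq_monomial]
    have hexpand : ∀ l, ofFn (n + 1) (U l) ⊗ₜ[K] (ofFn (m + 1) (V l) ⊗ₜ[K]
        ofFn (n + m + 1) (W l)) = ∑ i : Fin (n + 1), ∑ j : Fin (m + 1), ∑ k : Fin (n + m + 1),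
          (U l i * V l j * W l k) •
            ((X : K[X]) ^ (i : ℕ)) ⊗ₜ[K] (((X : K[X]) ^ (j : ℕ)) ⊗ₜ[K] ((X : K[X]) ^ (k : ℕ))) := by
      intro l
      simp only [hX]
      rw [sum_tmul]
      refine Finset.sum_congr rfl fun i _ => ?_
      rw [sum_tmul, tmul_sum]
      refine Finset.sum_congr rfl fun j _ => ?_
      rw [tmul_sum, tmul_sum]
      refine Finset.sum_congr rfl fun k _ => ?_
      simp only [tmul_smul, ← smul_tmul', smul_smul]
      congr 1
      ring
    simp only [hexpand, Finset.sum_range]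
    rw [Finset.sum_comm]
    refine Finset.sum_congr rfl fun i _ => ?_
    rw [Finset.sum_comm]
    refine Finset.sum_congr rfl fun j _ => ?_
    rw [Finset.sum_comm]
    simp only [← Finset.sum_smul, h i j]
    rw [Finset.sum_eq_single (⟨i + j, by omega⟩ : Fin (n + m + 1))]
    · simp
    · intro k _ hk
      rw [if_neg (fun hij => hk (Fin.ext hij.symm)), zero_smul]
    · simp

theorem polyMulRank_eq {U : Fin r → Fin (n + 1) → K} {V : Fin r → Fin (m + 1) → K}
    {W : Fin r → Fin (n + m + 1) → K} (h : IsMulScheme U V W)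
    (hlow : ∀ (s : ℕ) (U : Fin s → Fin (n + 1) → K) (V : Fin s → Fin (m + 1) → K)
      (W : Fin s → Fin (n + m + 1) → K), IsMulScheme U V W → r ≤ s) :
    polyMulRank K n m = r := by
  have hr := exists_isMulScheme_iff.mpr ⟨U, V, W, h⟩
  refine le_antisymm (Nat.sInf_le hr) (le_csInf ⟨r, hr⟩ fun s hs => ?_)
  obtain ⟨U', V', W', h'⟩ := exists_isMulScheme_iff.mp hs
  exact hlow s U' V' W' h'

variable {U : Fin r → Fin (n + 1) → K} {V : Fin r → Fin (m + 1) → K}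
  {W : Fin r → Fin (n + m + 1) → K}

theorem IsMulScheme.coeffMul_eq (h : IsMulScheme U V W) (p : Fin (n + 1) → K)
    (q : Fin (m + 1) → K) :
    coeffMul p q = ∑ l, ((U l ⬝ᵥ p) * (V l ⬝ᵥ q)) • W l := by
  ext k
  have hterm : ∀ (i : Fin (n + 1)) (j : Fin (m + 1)), (if (i : ℕ) + j = k then p i * q j else 0) =
      ∑ l, U l i * p i * (V l j * q j) * W l k := by
    intro i j
    have := congrArg (p i * q j * ·) (h i j k)
    simp only [mul_ite, mul_one, mul_zero] at this
    rw [← this, Finset.mul_sum]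
    exact Finset.sum_congr rfl fun l _ => by ring
  simp only [coeffMul, hterm, Finset.sum_apply, Pi.smul_apply, smul_eq_mul, dotProduct,
    Finset.sum_mul_sum]
  simp only [Finset.sum_mul]
  rw [eq_comm, Finset.sum_comm]
  exact Finset.sum_congr rfl fun i _ => Finset.sum_comm

variable [DecidableEq K]

/-- The indices of the products to which `p` contributes. -/
def schemeSupport (U : Fin r → Fin (n + 1) → K) (p : Fin (n + 1) → K) : Finset (Fin r) :=
  {l | U l ⬝ᵥ p ≠ 0}

theorem mem_schemeSupport {p : Fin (n + 1) → K} {l : Fin r} :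
    l ∈ schemeSupport U p ↔ U l ⬝ᵥ p ≠ 0 := by
  simp [schemeSupport]

/-- The second linear forms of a scheme, restricted to the support of `p`. -/
def supportForms (U : Fin r → Fin (n + 1) → K) (V : Fin r → Fin (m + 1) → K)
    (p : Fin (n + 1) → K) : (Fin (m + 1) → K) →ₗ[K] (schemeSupport U p → K) :=
  LinearMap.pi fun l => dotProductBilin K K (V l)

theorem IsMulScheme.supportForms_injective (h : IsMulScheme U V W) {p : Fin (n + 1) → K}
    (hp : p ≠ 0) : Function.Injective (supportForms U V p) := by
  rw [← LinearMap.ker_eq_bot, LinearMap.ker_eq_bot']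
  intro q hq
  refine coeffMul_eq_zero hp ?_
  rw [h.coeffMul_eq]
  refine Finset.sum_eq_zero fun l _ => ?_
  by_cases hl : U l ⬝ᵥ p = 0
  · simp [hl]
  · have : V l ⬝ᵥ q = 0 := congrFun hq ⟨l, mem_schemeSupport.mpr hl⟩
    simp [this]

theorem IsMulScheme.le_card_schemeSupport (h : IsMulScheme U V W) {p : Fin (n + 1) → K}
    (hp : p ≠ 0) : m + 1 ≤ (schemeSupport U p).card := by
  simpa using LinearMap.finrank_le_finrank_of_injective (h.supportForms_injective hp)

/-- If the support of `p` is as small as possible, then each third component `W l` with `l` in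
this support is, up to a scalar, a multiple of `p`. -/
theorem IsMulScheme.exists_coeffMul_eq (h : IsMulScheme U V W) {p : Fin (n + 1) → K}
    (hp : p ≠ 0) (hcard : (schemeSupport U p).card = m + 1) {l : Fin r}
    (hl : l ∈ schemeSupport U p) :
    ∃ q, V l ⬝ᵥ q = 1 ∧ (∀ k ∈ schemeSupport U p, k ≠ l → V k ⬝ᵥ q = 0) ∧
      coeffMul p q = (U l ⬝ᵥ p) • W l := by
  have hsurj : Function.Surjective (supportForms U V p) :=
    (LinearMap.injective_iff_surjective_of_finrank_eq_finrank (by simp [hcard])).mp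
      (h.supportForms_injective hp)
  obtain ⟨q, hq⟩ := hsurj (Pi.single ⟨l, hl⟩ 1)
  have hone : V l ⬝ᵥ q = 1 := by
    exact (congrFun hq ⟨l, hl⟩ : V l ⬝ᵥ q = _).trans (Pi.single_eq_same _ _)
  have hzero : ∀ k ∈ schemeSupport U p, k ≠ l → V k ⬝ᵥ q = 0 := by
    intro k hk hkl
    exact (congrFun hq ⟨k, hk⟩ : V k ⬝ᵥ q = _).trans
      (Pi.single_eq_of_ne (fun hkl' => hkl (congrArg Subtype.val hkl')) _)
  refine ⟨q, hone, hzero, ?_⟩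
  rw [h.coeffMul_eq, Finset.sum_eq_single l, hone, mul_one]
  · intro k _ hkl
    by_cases hk : k ∈ schemeSupport U p
    · simp [hzero k hk hkl]
    · simp [not_not.mp (mt mem_schemeSupport.mpr hk)]
  · simp

/-- Double counting the pairs `(f i, l)` with `l` in the support of `f i`. -/
theorem sum_card_schemeSupport_le {ι : Type} [Fintype ι] (U : Fin r → Fin (n + 1) → K)
    (f : ι → Fin (n + 1) → K) {c : ℕ}
    (hf : ∀ u : Fin (n + 1) → K, ∑ i, (if u ⬝ᵥ f i ≠ 0 then 1 else 0) ≤ c) :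
    ∑ i, (schemeSupport U (f i)).card ≤ r * c := by
  simp only [schemeSupport, Finset.card_filter]
  rw [Finset.sum_comm]
  simpa using Finset.sum_le_sum fun l (_ : l ∈ Finset.univ) => hf (U l)

end General

section ZModTwo

variable {n m r : ℕ} {U : Fin r → Fin (n + 1) → ZMod 2} {V : Fin r → Fin (m + 1) → ZMod 2}
  {W : Fin r → Fin (n + m + 1) → ZMod 2}

theorem card_symmDiff_add {α : Type} [DecidableEq α] (s t : Finset α) :
    (symmDiff s t).card + 2 * (s ∩ t).card = s.card + t.card := by
  have hs := Finset.card_sdiff_add_card_inter s t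
  have ht := Finset.card_sdiff_add_card_inter t s
  rw [Finset.inter_comm] at ht
  rw [symmDiff, Finset.sup_eq_union, Finset.card_union_of_disjoint disjoint_sdiff_sdiff]
  omega

theorem schemeSupport_add (U : Fin r → Fin (n + 1) → ZMod 2) (p p' : Fin (n + 1) → ZMod 2) :
    schemeSupport U (p + p') = symmDiff (schemeSupport U p) (schemeSupport U p') := by
  have key : ∀ a b : ZMod 2, a + b ≠ 0 ↔ (a ≠ 0 ∧ ¬ b ≠ 0) ∨ (b ≠ 0 ∧ ¬ a ≠ 0) := by decide
  ext l
  simp only [Finset.mem_symmDiff, mem_schemeSupport, dotProduct_add, key]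

theorem card_schemeSupport_add (U : Fin r → Fin (n + 1) → ZMod 2)
    (p p' : Fin (n + 1) → ZMod 2) :
    (schemeSupport U (p + p')).card + 2 * (schemeSupport U p ∩ schemeSupport U p').card =
      (schemeSupport U p).card + (schemeSupport U p').card := by
  rw [schemeSupport_add, card_symmDiff_add]

theorem IsMulScheme.exists_coeffMul_eq_of_zmod_two (h : IsMulScheme U V W)
    {p : Fin (n + 1) → ZMod 2} (hp : p ≠ 0) (hcard : (schemeSupport U p).card = m + 1)
    {l : Fin r} (hl : l ∈ schemeSupport U p) :
    ∃ q, V l ⬝ᵥ q = 1 ∧ (∀ k ∈ schemeSupport U p, k ≠ l → V k ⬝ᵥ q = 0) ∧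
      coeffMul p q = W l := by
  have key : ∀ a : ZMod 2, a ≠ 0 → a = 1 := by decide
  simpa [key _ (mem_schemeSupport.mp hl)] using h.exists_coeffMul_eq hp hcard hl

/-- The averaging bound for the binary linear code generated by the linear forms `U`. -/
theorem IsMulScheme.le_of_one_left {U : Fin r → Fin 2 → ZMod 2}
    {V : Fin r → Fin (m + 1) → ZMod 2} {W : Fin r → Fin (1 + m + 1) → ZMod 2}
    (h : IsMulScheme U V W) : 3 * (m + 1) ≤ r * 2 := by
  let f : Fin 3 → Fin 2 → ZMod 2 := ![![1, 0], ![0, 1], ![1, 1]]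
  have hf : ∀ i, f i ≠ 0 := by decide
  have hsum := sum_card_schemeSupport_le U f (c := 2) (by decide)
  have hle := Finset.card_nsmul_le_sum Finset.univ (fun i => (schemeSupport U (f i)).card) (m + 1)
    fun i _ => h.le_card_schemeSupport (hf i)
  simp only [Finset.card_univ, Fintype.card_fin, smul_eq_mul] at hle
  omega

/-- The nonzero vectors of the space of quadratic polynomials. -/
def nonzeroQuadratics : Fin 7 → Fin 3 → ZMod 2 :=
  ![![1, 0, 0], ![0, 1, 0], ![0, 0, 1], ![1, 1, 0], ![1, 0, 1], ![0, 1, 1], ![1, 1, 1]]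

theorem sum_card_nonzeroQuadratics_le (U : Fin r → Fin 3 → ZMod 2) :
    ∑ i, (schemeSupport U (nonzeroQuadratics i)).card ≤ r * 4 :=
  sum_card_schemeSupport_le U nonzeroQuadratics (by decide +kernel)

theorem IsMulScheme.le_card_nonzeroQuadratics {U : Fin r → Fin 3 → ZMod 2}
    {V : Fin r → Fin (m + 1) → ZMod 2} {W : Fin r → Fin (2 + m + 1) → ZMod 2}
    (h : IsMulScheme U V W) (i : Fin 7) :
    m + 1 ≤ (schemeSupport U (nonzeroQuadratics i)).card :=
  h.le_card_schemeSupport (n := 2) ((by decide : ∀ i, nonzeroQuadratics i ≠ 0) i)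

theorem IsMulScheme.le_of_two_two {U V : Fin r → Fin 3 → ZMod 2} {W : Fin r → Fin 5 → ZMod 2}
    (h : IsMulScheme (n := 2) (m := 2) U V W) : 6 ≤ r := by
  have hsum := sum_card_nonzeroQuadratics_le U
  have hle := Finset.card_nsmul_le_sum Finset.univ _ 3
    fun i _ => h.le_card_nonzeroQuadratics i
  simp only [Finset.card_univ, Fintype.card_fin, smul_eq_mul] at hle
  omega

theorem IsMulScheme.le_of_two_four {U : Fin r → Fin 3 → ZMod 2} {V : Fin r → Fin 5 → ZMod 2}
    {W : Fin r → Fin 7 → ZMod 2} (h : IsMulScheme (n := 2) (m := 4) U V W) : 10 ≤ r := by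
  have hsum := sum_card_nonzeroQuadratics_le U
  have hle := h.le_card_nonzeroQuadratics
  have hadd : ∀ i j k, nonzeroQuadratics i + nonzeroQuadratics j = nonzeroQuadratics k → _ :=
    fun i j k hk => hk ▸ card_schemeSupport_add U (nonzeroQuadratics i) (nonzeroQuadratics j)
  have h₁ := hadd 0 1 3 (by decide)
  have h₂ := hadd 0 2 4 (by decide)
  have h₃ := hadd 1 2 5 (by decide)
  rw [Fin.sum_univ_seven] at hsum
  have := hle 0
  have := hle 1
  have := hle 2
  have := hle 3
  have := hle 4
  have := hle 5
  have := hle 6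
  omega

/-- The polynomials `1`, `X ^ 2` and `1 + X + X ^ 2` have no nonzero common multiple of degree at
most `5` with all cofactors of degree at most `3`. -/
theorem eq_zero_of_common_multiple (a b c : Fin 4 → ZMod 2)
    (hab : coeffMul (n := 2) (m := 3) ![1, 0, 0] a = coeffMul (n := 2) (m := 3) ![0, 0, 1] b)
    (hac : coeffMul (n := 2) (m := 3) ![1, 0, 0] a = coeffMul (n := 2) (m := 3) ![1, 1, 1] c) :
    a = 0 := by
  have hlow : ∀ a b : Fin 4 → ZMod 2, coeffMul (n := 2) (m := 3) ![1, 0, 0] a =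
      coeffMul (n := 2) (m := 3) ![0, 0, 1] b → a 0 = 0 ∧ a 1 = 0 := by decide +kernel
  have hhigh : ∀ a c : Fin 4 → ZMod 2, coeffMul (n := 2) (m := 3) ![1, 0, 0] a =
      coeffMul (n := 2) (m := 3) ![1, 1, 1] c → a 0 = 0 ∧ a 1 = 0 → a = 0 := by decide +kernel
  exact hhigh a c hac (hlow a b hab)

theorem IsMulScheme.le_of_two_three {U : Fin r → Fin 3 → ZMod 2} {V : Fin r → Fin 4 → ZMod 2}
    {W : Fin r → Fin 6 → ZMod 2} (h : IsMulScheme (n := 2) (m := 3) U V W) : 8 ≤ r := by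
  by_contra! hr
  have hsum := sum_card_nonzeroQuadratics_le U
  have hle := h.le_card_nonzeroQuadratics
  have hfour : ∀ p : Fin 3 → ZMod 2, p ≠ 0 → (schemeSupport U p).card = 4 := by
    intro p hp
    obtain ⟨i, rfl⟩ :=
      (by decide : ∀ p : Fin 3 → ZMod 2, p ≠ 0 → ∃ i, nonzeroQuadratics i = p) p hp
    have hrest := Finset.card_nsmul_le_sum (Finset.univ.erase i) _ 4 fun j _ => hle j
    rw [← Finset.add_sum_erase _ _ (Finset.mem_univ i)] at hsum
    simp only [Finset.card_erase_of_mem, Finset.mem_univ, Finset.card_univ, Fintype.card_fin,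
      smul_eq_mul] at hrest
    have := hle i
    omega
  have hinter : ∀ p p' : Fin 3 → ZMod 2, p ≠ 0 → p' ≠ 0 → p + p' ≠ 0 →
      (schemeSupport U p ∩ schemeSupport U p').card = 2 := by
    intro p p' hp hp' hpp'
    have := card_schemeSupport_add U p p'
    rw [hfour _ hp, hfour _ hp', hfour _ hpp'] at this
    omega
  let A := schemeSupport U ![1, 0, 0]
  let B := schemeSupport U ![0, 0, 1]
  let C := schemeSupport U ![1, 1, 1]
  have hABC : ((A ∩ B) ∩ (A ∩ C)).card = 1 := by
    have hAB : (A ∩ B).card = 2 := hinter _ _ (by decide) (by decide) (by decide)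
    have hAC : (A ∩ C).card = 2 := hinter _ _ (by decide) (by decide) (by decide)
    have hABC : (A ∩ symmDiff B C).card = 2 := by
      simp only [A, B, C]
      rw [← schemeSupport_add]
      exact hinter _ _ (by decide) (by decide) (by decide)
    have := card_symmDiff_add (A ∩ B) (A ∩ C)
    have hdistrib : symmDiff (A ∩ B) (A ∩ C) = A ∩ symmDiff B C :=
      (inf_symmDiff_distrib_left A B C).symm
    rw [hdistrib] at this
    omega
  obtain ⟨l, hl⟩ := Finset.card_pos.mp (hABC ▸ one_pos)
  simp only [Finset.mem_inter] at hl
  obtain ⟨a, ha, -, haW⟩ :=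
    h.exists_coeffMul_eq_of_zmod_two (by decide) (hfour _ (by decide)) hl.1.1
  obtain ⟨b, -, -, hbW⟩ :=
    h.exists_coeffMul_eq_of_zmod_two (by decide) (hfour _ (by decide)) hl.1.2
  obtain ⟨c, -, -, hcW⟩ :=
    h.exists_coeffMul_eq_of_zmod_two (by decide) (hfour _ (by decide)) hl.2.2
  rw [eq_zero_of_common_multiple a b c (haW.trans hbW.symm) (haW.trans hcW.symm),
    dotProduct_zero] at ha
  exact zero_ne_one ha

/-- First generators of five pairwise disjoint planes in the space of cubic polynomials. -/
def spreadLeft : Fin 5 → Fin 4 → ZMod 2 :=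
  ![![0, 0, 1, 0], ![1, 0, 1, 0], ![1, 1, 1, 0], ![1, 0, 0, 0], ![0, 1, 1, 0]]

/-- Second generators of five pairwise disjoint planes in the space of cubic polynomials. -/
def spreadRight : Fin 5 → Fin 4 → ZMod 2 :=
  ![![1, 0, 0, 1], ![1, 1, 0, 1], ![0, 0, 0, 1], ![0, 1, 0, 0], ![0, 1, 0, 1]]

/-- The first three planes are spanned by polynomials that are coprime as binary cubic forms. -/
theorem eq_zero_or_eq_of_coeffMul_spread : ∀ i : Fin 5, i < 3 → ∀ q q' : Fin 4 → ZMod 2,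
    coeffMul (n := 3) (m := 3) (spreadLeft i) q = coeffMul (n := 3) (m := 3) (spreadRight i) q' →
      q = 0 ∨ q = spreadRight i := by
  decide +kernel

/-- Two coprime cubics and their sum cannot all have support of size `4`. -/
theorem IsMulScheme.le_sum_card_of_spread {U V : Fin r → Fin 4 → ZMod 2} {W : Fin r → Fin 7 → ZMod 2}
    (h : IsMulScheme (n := 3) (m := 3) U V W) (i : Fin 5) (hi : i < 3) :
    14 ≤ (schemeSupport U (spreadLeft i)).card + (schemeSupport U (spreadRight i)).card +
      (schemeSupport U (spreadLeft i + spreadRight i)).card := by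
  have hp : spreadLeft i ≠ 0 := (by decide : ∀ i, spreadLeft i ≠ 0) i
  have hp' : spreadRight i ≠ 0 := (by decide : ∀ i, spreadRight i ≠ 0) i
  have hpp' : spreadLeft i + spreadRight i ≠ 0 :=
    (by decide : ∀ i, spreadLeft i + spreadRight i ≠ 0) i
  have hle := h.le_card_schemeSupport hp
  have hle' := h.le_card_schemeSupport hp'
  have hle'' := h.le_card_schemeSupport hpp'
  have hadd := card_schemeSupport_add U (spreadLeft i) (spreadRight i)
  by_contra! hlt
  have hcard : (schemeSupport U (spreadLeft i)).card = 4 := by omega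
  have hcard' : (schemeSupport U (spreadRight i)).card = 4 := by omega
  obtain ⟨l, k, hlk, hset⟩ := Finset.card_eq_two.mp
    (by omega : (schemeSupport U (spreadLeft i) ∩ schemeSupport U (spreadRight i)).card = 2)
  have hl : l ∈ schemeSupport U (spreadLeft i) ∩ schemeSupport U (spreadRight i) := by simp [hset]
  have hk : k ∈ schemeSupport U (spreadLeft i) ∩ schemeSupport U (spreadRight i) := by simp [hset]
  rw [Finset.mem_inter] at hl hk
  have hquot : ∀ t, t ∈ schemeSupport U (spreadLeft i) → t ∈ schemeSupport U (spreadRight i) →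
      V t ⬝ᵥ spreadRight i = 1 ∧
        ∀ s ∈ schemeSupport U (spreadLeft i), s ≠ t → V s ⬝ᵥ spreadRight i = 0 := by
    intro t ht ht'
    obtain ⟨q, hq, hq0, hqW⟩ := h.exists_coeffMul_eq_of_zmod_two hp hcard ht
    obtain ⟨q', -, -, hqW'⟩ := h.exists_coeffMul_eq_of_zmod_two hp' hcard' ht'
    rcases eq_zero_or_eq_of_coeffMul_spread i hi q q' (hqW.trans hqW'.symm) with rfl | rfl
    · simp at hq
    · exact ⟨hq, hq0⟩
  have hone := (hquot l hl.1 hl.2).1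
  rw [(hquot k hk.1 hk.2).2 l hl.1 hlk] at hone
  exact zero_ne_one hone

theorem IsMulScheme.le_of_three_three {U V : Fin r → Fin 4 → ZMod 2}
    {W : Fin r → Fin 7 → ZMod 2} (h : IsMulScheme (n := 3) (m := 3) U V W) : 9 ≤ r := by
  let f : Fin 5 × Fin 3 → Fin 4 → ZMod 2 := fun x =>
    ![spreadLeft x.1, spreadRight x.1, spreadLeft x.1 + spreadRight x.1] x.2
  have hf : ∀ x, f x ≠ 0 := by decide
  have hsum := sum_card_schemeSupport_le U f (c := 8) (by decide +kernel)
  have hle : ∀ x, 4 ≤ (schemeSupport U (f x)).card := fun x => h.le_card_schemeSupport (hf x)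
  rw [Fintype.sum_prod_type] at hsum
  have hplane : ∀ i, (if i < 3 then 14 else 12) ≤ ∑ j, (schemeSupport U (f (i, j))).card := by
    intro i
    rw [Fin.sum_univ_three]
    split_ifs with hi
    · exact h.le_sum_card_of_spread i hi
    · linarith [hle (i, 0), hle (i, 1), hle (i, 2)]
  have := (Finset.sum_le_sum fun i (_ : i ∈ Finset.univ) => hplane i).trans hsum
  have hval : ∑ i : Fin 5, (if i < 3 then 14 else 12) = 66 := by decide
  omega

end ZModTwo

/-- Over the field `ℤ/2` with two elements, the rank of the polynomial
multiplication tensor `T_{n,m}` equals 3 for `(n,m) = (1,1)`, 5 for `(1,2)`, 6 for `(1,3)`,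
8 for `(1,4)`, 9 for `(1,5)`, 6 for `(2,2)`, 8 for `(2,3)`, 10 for `(2,4)`, and 9 for
`(3,3)`. -/
theorem polyMulRank_zmod_two_values :
    polyMulRank (ZMod 2) 1 1 = 3 ∧
    polyMulRank (ZMod 2) 1 2 = 5 ∧
    polyMulRank (ZMod 2) 1 3 = 6 ∧
    polyMulRank (ZMod 2) 1 4 = 8 ∧
    polyMulRank (ZMod 2) 1 5 = 9 ∧
    polyMulRank (ZMod 2) 2 2 = 6 ∧
    polyMulRank (ZMod 2) 2 3 = 8 ∧
    polyMulRank (ZMod 2) 2 4 = 10 ∧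
    polyMulRank (ZMod 2) 3 3 = 9 := by
  refine ⟨?_, ?_, ?_, ?_, ?_, ?_, ?_, ?_, ?_⟩
  · refine polyMulRank_eq
      (U := ![![1, 0], ![0, 1], ![1, 1]])
      (V := ![![1, 0], ![0, 1], ![1, 1]])
      (W := ![![1, 1, 0], ![0, 1, 1], ![0, 1, 0]])
      (by decide +kernel) fun s U V W h => ?_
    have := h.le_of_one_left
    omega
  · refine polyMulRank_eq
      (U := ![![1, 0], ![0, 1], ![1, 1], ![1, 0], ![0, 1]])
      (V := ![![1, 0, 0], ![0, 1, 0], ![1, 1, 0], ![0, 0, 1], ![0, 0, 1]])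
      (W := ![![1, 1, 0, 0], ![0, 1, 1, 0], ![0, 1, 0, 0], ![0, 0, 1, 0], ![0, 0, 0, 1]])
      (by decide +kernel) fun s U V W h => ?_
    have := h.le_of_one_left
    omega
  · refine polyMulRank_eq
      (U := ![![1, 0], ![0, 1], ![1, 1], ![1, 0], ![0, 1], ![1, 1]])
      (V := ![![1, 0, 0, 0], ![0, 1, 0, 0], ![1, 1, 0, 0], ![0, 0, 1, 0], ![0, 0, 0, 1],
        ![0, 0, 1, 1]])
      (W := ![![1, 1, 0, 0, 0], ![0, 1, 1, 0, 0], ![0, 1, 0, 0, 0], ![0, 0, 1, 1, 0],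
        ![0, 0, 0, 1, 1], ![0, 0, 0, 1, 0]])
      (by decide +kernel) fun s U V W h => ?_
    have := h.le_of_one_left
    omega
  · refine polyMulRank_eq
      (U := ![![1, 0], ![0, 1], ![1, 1], ![1, 0], ![0, 1], ![1, 1], ![1, 0], ![0, 1]])
      (V := ![![1, 0, 0, 0, 0], ![0, 1, 0, 0, 0], ![1, 1, 0, 0, 0], ![0, 0, 1, 0, 0],
        ![0, 0, 0, 1, 0], ![0, 0, 1, 1, 0], ![0, 0, 0, 0, 1], ![0, 0, 0, 0, 1]])
      (W := ![![1, 1, 0, 0, 0, 0], ![0, 1, 1, 0, 0, 0], ![0, 1, 0, 0, 0, 0], ![0, 0, 1, 1, 0, 0],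
        ![0, 0, 0, 1, 1, 0], ![0, 0, 0, 1, 0, 0], ![0, 0, 0, 0, 1, 0], ![0, 0, 0, 0, 0, 1]])
      (by decide +kernel) fun s U V W h => ?_
    have := h.le_of_one_left
    omega
  · refine polyMulRank_eq
      (U := ![![1, 0], ![0, 1], ![1, 1], ![1, 0], ![0, 1], ![1, 1], ![1, 0], ![0, 1], ![1, 1]])
      (V := ![![1, 0, 0, 0, 0, 0], ![0, 1, 0, 0, 0, 0], ![1, 1, 0, 0, 0, 0], ![0, 0, 1, 0, 0, 0],
        ![0, 0, 0, 1, 0, 0], ![0, 0, 1, 1, 0, 0], ![0, 0, 0, 0, 1, 0], ![0, 0, 0, 0, 0, 1],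
        ![0, 0, 0, 0, 1, 1]])
      (W := ![![1, 1, 0, 0, 0, 0, 0], ![0, 1, 1, 0, 0, 0, 0], ![0, 1, 0, 0, 0, 0, 0],
        ![0, 0, 1, 1, 0, 0, 0], ![0, 0, 0, 1, 1, 0, 0], ![0, 0, 0, 1, 0, 0, 0],
        ![0, 0, 0, 0, 1, 1, 0], ![0, 0, 0, 0, 0, 1, 1], ![0, 0, 0, 0, 0, 1, 0]])
      (by decide +kernel) fun s U V W h => ?_
    have := h.le_of_one_left
    omega
  · refine polyMulRank_eq
      (U := ![![1, 0, 0], ![0, 1, 0], ![0, 0, 1], ![1, 1, 0], ![1, 0, 1], ![0, 1, 1]])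
      (V := ![![1, 0, 0], ![0, 1, 0], ![0, 0, 1], ![1, 1, 0], ![1, 0, 1], ![0, 1, 1]])
      (W := ![![1, 1, 1, 0, 0], ![0, 1, 1, 1, 0], ![0, 0, 1, 1, 1], ![0, 1, 0, 0, 0],
        ![0, 0, 1, 0, 0], ![0, 0, 0, 1, 0]])
      (by decide +kernel) fun s U V W h => ?_
    exact h.le_of_two_two
  · refine polyMulRank_eq
      (U := ![![1, 0, 0], ![0, 1, 0], ![1, 1, 0], ![0, 0, 1], ![1, 1, 1], ![1, 0, 1], ![0, 1, 1],
        ![1, 1, 0]])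
      (V := ![![1, 0, 0, 0], ![0, 1, 0, 0], ![1, 1, 0, 0], ![0, 0, 0, 1], ![1, 1, 1, 1],
        ![1, 0, 1, 1], ![0, 1, 1, 0], ![1, 1, 0, 1]])
      (W := ![![1, 1, 0, 1, 1, 0], ![0, 1, 0, 0, 1, 0], ![0, 1, 0, 0, 1, 0], ![0, 0, 1, 0, 0, 1],
        ![0, 0, 1, 1, 1, 0], ![0, 0, 0, 1, 1, 0], ![0, 0, 1, 0, 1, 0], ![0, 0, 1, 1, 0, 0]])
      (by decide +kernel) fun s U V W h => ?_
    exact h.le_of_two_three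
  · refine polyMulRank_eq
      (U := ![![1, 0, 0], ![0, 1, 0], ![1, 1, 0], ![0, 0, 1], ![0, 1, 0], ![0, 1, 1], ![1, 1, 1],
        ![1, 0, 1], ![0, 1, 1], ![1, 1, 0]])
      (V := ![![1, 0, 0, 0, 0], ![0, 1, 0, 0, 0], ![1, 1, 0, 0, 0], ![0, 0, 0, 0, 1],
        ![0, 0, 0, 1, 0], ![0, 0, 0, 1, 1], ![1, 1, 1, 1, 1], ![1, 0, 1, 1, 0], ![0, 1, 1, 0, 1],
        ![1, 1, 0, 1, 1]])
      (W := ![![1, 1, 0, 1, 1, 0, 0], ![0, 1, 0, 0, 1, 0, 0], ![0, 1, 0, 0, 1, 0, 0],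
        ![0, 0, 1, 1, 0, 1, 1], ![0, 0, 1, 0, 0, 1, 0], ![0, 0, 1, 0, 0, 1, 0],
        ![0, 0, 1, 1, 1, 0, 0], ![0, 0, 0, 1, 1, 0, 0], ![0, 0, 1, 0, 1, 0, 0],
        ![0, 0, 1, 1, 0, 0, 0]])
      (by decide +kernel) fun s U V W h => ?_
    exact h.le_of_two_four
  · refine polyMulRank_eq
      (U := ![![1, 0, 0, 0], ![0, 1, 0, 0], ![1, 1, 0, 0], ![0, 0, 1, 0], ![0, 0, 0, 1],
        ![0, 0, 1, 1], ![1, 0, 1, 0], ![0, 1, 0, 1], ![1, 1, 1, 1]])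
      (V := ![![1, 0, 0, 0], ![0, 1, 0, 0], ![1, 1, 0, 0], ![0, 0, 1, 0], ![0, 0, 0, 1],
        ![0, 0, 1, 1], ![1, 0, 1, 0], ![0, 1, 0, 1], ![1, 1, 1, 1]])
      (W := ![![1, 1, 1, 1, 0, 0, 0], ![0, 1, 1, 1, 1, 0, 0], ![0, 1, 0, 1, 0, 0, 0],
        ![0, 0, 1, 1, 1, 1, 0], ![0, 0, 0, 1, 1, 1, 1], ![0, 0, 0, 1, 0, 1, 0],
        ![0, 0, 1, 1, 0, 0, 0], ![0, 0, 0, 1, 1, 0, 0], ![0, 0, 0, 1, 0, 0, 0]])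
      (by decide +kernel) fun s U V W h => ?_
    exact h.le_of_three_three
end

section
/- Let K = Z_2 be the field with two elements. For every (n,m) ∈ {(1,1), (1,2), (1,3), (1,4), (1,5), (2,2), (2,3), (2,4), (3,3)}, the flip graph of the polynomial multiplication tensor T_{n,m} over K has a path (consisting of flips and reductions) from the standard representation {(a_i, b_j, c_{i+j}) : 0 ≤ i ≤ n, 0 ≤ j ≤ m} to a representation whose length equals the rank of T_{n,m} over K. -/
open Polynomial TensorProduct

open FlipGraph

namespace FlipGraph

section Coding

variable {k r d : ℕ}

/-- The weight of the codeword `l ↦ A l ⬝ᵥ P` of the binary code generated by the columns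
`A l`. -/
def codeWeight (A : Fin r → Fin k → ZMod 2) (P : Fin k → ZMod 2) : ℕ :=
  (Finset.univ.filter fun l => A l ⬝ᵥ P = 1).card

lemma zmod_two_ne_zero_iff : ∀ x : ZMod 2, x ≠ 0 ↔ x = 1 := by decide

lemma exists_dotProduct_eq_one {b : Fin k → ZMod 2} (hb : b ≠ 0) : ∃ P, b ⬝ᵥ P = 1 := by
  obtain ⟨i, hi⟩ := Function.ne_iff.mp hb
  exact ⟨Pi.single i 1, by simpa using (zmod_two_ne_zero_iff _).mp hi⟩

lemma exists_dotProduct_eq_zero_and_eq_one {a b : Fin k → ZMod 2} (hb : b ≠ 0) (hab : b ≠ a) :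
    ∃ P, a ⬝ᵥ P = 0 ∧ b ⬝ᵥ P = 1 := by
  obtain ⟨i, hi⟩ := Function.ne_iff.mp hab
  obtain ⟨j, hj⟩ := Function.ne_iff.mp hb
  have key : ∀ ai bi aj bj : ZMod 2, bi ≠ ai → bj ≠ 0 →
      (ai = 0 ∧ bi = 1) ∨ (aj = 0 ∧ bj = 1) ∨ (ai + aj = 0 ∧ bi + bj = 1) := by decide
  rcases key (a i) (b i) (a j) (b j) hi hj with h | h | h
  · exact ⟨Pi.single i 1, by simpa using h⟩
  · exact ⟨Pi.single j 1, by simpa using h⟩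
  · exact ⟨Pi.single i 1 + Pi.single j 1, by simpa [dotProduct_add] using h⟩

/-- A translation exchanges the two cosets cut out by a functional. -/
lemma two_mul_card_dotProduct (p : (Fin k → ZMod 2) → Prop) [DecidablePred p]
    {b P₁ : Fin k → ZMod 2} (hP₁ : b ⬝ᵥ P₁ = 1) (hp : ∀ P, p (P + P₁) ↔ p P) :
    2 * (Finset.univ.filter fun P => p P ∧ b ⬝ᵥ P = 1).card =
      (Finset.univ.filter fun P => p P).card := by
  have hswap : (Finset.univ.filter fun P => p P ∧ b ⬝ᵥ P = 1).card =
      (Finset.univ.filter fun P => p P ∧ ¬ b ⬝ᵥ P = 1).card := by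
    refine Finset.card_equiv (Equiv.addRight P₁) fun P => ?_
    have key : ∀ x : ZMod 2, x = 1 ↔ ¬ x + 1 = 1 := by decide
    simp [dotProduct_add, hP₁, hp, key (b ⬝ᵥ P)]
  have := Finset.card_filter_add_card_filter_not
    (s := Finset.univ.filter fun P => p P) (fun P => b ⬝ᵥ P = 1)
  simp only [Finset.filter_filter] at this
  lia

lemma two_mul_card_dotProduct_eq_one {b : Fin k → ZMod 2} (hb : b ≠ 0) :
    2 * (Finset.univ.filter fun P => b ⬝ᵥ P = 1).card = 2 ^ k := by
  obtain ⟨P₁, hP₁⟩ := exists_dotProduct_eq_one hb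
  simpa using two_mul_card_dotProduct (fun _ => True) hP₁ (by simp)

lemma two_mul_card_dotProduct_eq_zero {b : Fin k → ZMod 2} (hb : b ≠ 0) :
    2 * (Finset.univ.filter fun P => b ⬝ᵥ P = 0).card = 2 ^ k := by
  have h := Finset.card_filter_add_card_filter_not
    (s := (Finset.univ : Finset (Fin k → ZMod 2))) (fun P => b ⬝ᵥ P = 0)
  simp only [← ne_eq, zmod_two_ne_zero_iff] at h
  have h₁ := two_mul_card_dotProduct_eq_one hb
  simp at h
  lia

lemma four_mul_card_dotProduct {a b : Fin k → ZMod 2} (ha : a ≠ 0) (hb : b ≠ 0) (hab : b ≠ a) :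
    4 * (Finset.univ.filter fun P => a ⬝ᵥ P = 0 ∧ b ⬝ᵥ P = 1).card = 2 ^ k := by
  obtain ⟨P₁, h₀, h₁⟩ := exists_dotProduct_eq_zero_and_eq_one hb hab
  have h := two_mul_card_dotProduct (fun P => a ⬝ᵥ P = 0) h₁ (by simp [dotProduct_add, h₀])
  have := two_mul_card_dotProduct_eq_zero ha
  lia

lemma sum_codeWeight (A : Fin r → Fin k → ZMod 2) (s : Finset (Fin k → ZMod 2)) :
    ∑ P ∈ s, codeWeight A P = ∑ l, (s.filter fun P => A l ⬝ᵥ P = 1).card := by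
  simp only [codeWeight, Finset.card_filter]
  exact Finset.sum_comm

lemma two_mul_sum_codeWeight_le (A : Fin r → Fin k → ZMod 2) :
    2 * ∑ P, codeWeight A P ≤ 2 ^ k * r := by
  rw [sum_codeWeight, Finset.mul_sum]
  refine (Finset.sum_le_card_nsmul _ _ (2 ^ k) fun l _ => ?_).trans (by simp [mul_comm])
  by_cases h : A l = 0
  · simp [h]
  · exact (two_mul_card_dotProduct_eq_one h).le

lemma two_mul_sum_codeWeight (A : Fin r → Fin k → ZMod 2) (hA : ∀ l, A l ≠ 0) :
    2 * ∑ P, codeWeight A P = 2 ^ k * r := by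
  rw [sum_codeWeight, Finset.mul_sum]
  simp [two_mul_card_dotProduct_eq_one (hA _), mul_comm]

/-- The total weight of the subcode obtained by shortening at the column `a`. -/
lemma four_mul_sum_codeWeight (A : Fin r → Fin k → ZMod 2) {a : Fin k → ZMod 2} (ha : a ≠ 0) :
    4 * ∑ P with a ⬝ᵥ P = 0, codeWeight A P =
      2 ^ k * (Finset.univ.filter fun l => A l ≠ 0 ∧ A l ≠ a).card := by
  rw [sum_codeWeight, Finset.mul_sum, Finset.card_filter, Finset.mul_sum]
  refine Finset.sum_congr rfl fun l _ => ?_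
  rw [Finset.filter_filter]
  split_ifs with h
  · rw [four_mul_card_dotProduct ha h.1 h.2, mul_one]
  · rw [mul_zero, Nat.mul_eq_zero, Finset.card_eq_zero]
    right
    ext P
    have : A l = 0 ∨ A l = a := by tauto
    rcases this with h | h <;> simp +contextual [h]

/-- Plotkin bound for binary linear codes. -/
lemma plotkin_bound (A : Fin r → Fin k → ZMod 2) (hA : ∀ P, P ≠ 0 → d ≤ codeWeight A P) :
    2 * ((2 ^ k - 1) * d) ≤ 2 ^ k * r := by
  refine le_trans ?_ (two_mul_sum_codeWeight_le A)
  rw [← Finset.add_sum_erase _ _ (Finset.mem_univ 0)]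
  have := Finset.card_nsmul_le_sum (Finset.univ.erase (0 : Fin k → ZMod 2)) (codeWeight A) d
    fun P hP => hA P (Finset.ne_of_mem_erase hP)
  simp [Finset.card_erase_of_mem] at this
  lia

lemma card_filter_ne_add_le (A : Fin r → Fin k → ZMod 2) (s : Finset (Fin r))
    {a : Fin k → ZMod 2} (hs : ∀ l ∈ s, A l = 0 ∨ A l = a) :
    (Finset.univ.filter fun l => A l ≠ 0 ∧ A l ≠ a).card + s.card ≤ r := by
  rw [← Finset.card_union_of_disjoint]
  · simpa using Finset.card_le_univ (α := Fin r) _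
  · rw [Finset.disjoint_left]
    intro l hl hls
    have := hs l hls
    simp at hl
    tauto

lemma exists_ne_zero (A : Fin r → Fin k → ZMod 2) (hk : 0 < k) (hd : 0 < d)
    (hA : ∀ P, P ≠ 0 → d ≤ codeWeight A P) : ∃ l, A l ≠ 0 := by
  by_contra! h
  have := hA (Pi.single ⟨0, hk⟩ 1) (by simp)
  simp [codeWeight, h] at this
  lia

/-- Lower bound for the total weight of a shortened code, isolating one codeword. -/
lemma le_sum_codeWeight_shortened (A : Fin r → Fin k → ZMod 2)
    (hA : ∀ P, P ≠ 0 → d ≤ codeWeight A P) {a Q : Fin k → ZMod 2} (ha : a ≠ 0)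
    (hQ : Q ≠ 0) (haQ : a ⬝ᵥ Q = 0) :
    2 ^ k * d + 2 * codeWeight A Q ≤
      2 * ∑ P with a ⬝ᵥ P = 0, codeWeight A P + 4 * d := by
  have hcard := two_mul_card_dotProduct_eq_zero ha
  set s := Finset.univ.filter fun P : Fin k → ZMod 2 => a ⬝ᵥ P = 0
  have h0 : 0 ∈ s := by simp [s]
  have hQs : Q ∈ s.erase 0 := by simp [s, hQ, haQ]
  rw [← Finset.add_sum_erase _ _ h0, ← Finset.add_sum_erase _ _ hQs]
  have := Finset.card_nsmul_le_sum ((s.erase 0).erase Q) (codeWeight A) d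
    fun P hP => hA P (Finset.ne_of_mem_erase (Finset.mem_of_mem_erase hP))
  have h1 := Finset.card_erase_add_one h0
  have h2 := Finset.card_erase_add_one hQs
  rw [smul_eq_mul] at this
  have h3 : 2 ^ k * d = 2 * (((s.erase 0).erase Q).card * d) + 4 * d := by
    rw [← hcard, ← h1, ← h2]; ring
  lia

lemma exists_dotProduct_eq_zero (hk : 2 ≤ k) (a : Fin k → ZMod 2) :
    ∃ Q, Q ≠ 0 ∧ a ⬝ᵥ Q = 0 := by
  by_contra! h
  have hi : Function.Injective (Matrix.toLin' (Matrix.of fun _ : Fin 1 => a)) := by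
    rw [← LinearMap.ker_eq_bot, LinearMap.ker_eq_bot']
    intro Q hQ
    by_contra hne
    exact h Q hne (by simpa [Matrix.mulVec, funext_iff] using hQ)
  have := LinearMap.finrank_le_finrank_of_injective hi
  simp at this
  lia

/-- A binary code that is nearly optimal for the shortened Plotkin bound has distinct nonzero
columns. -/
lemma injective_and_ne_zero_of_shortened_bound (A : Fin r → Fin k → ZMod 2) (hk : 2 ≤ k)
    (hd : 0 < d) (hA : ∀ P, P ≠ 0 → d ≤ codeWeight A P)
    (hr : 2 ^ k * r + 4 * d < 2 ^ k * (2 * d + 2)) :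
    Function.Injective A ∧ ∀ l, A l ≠ 0 := by
  have key : ∀ a l l', a ≠ 0 → l ≠ l' → (A l = 0 ∨ A l = a) → A l' = a → False := by
    intro a l l' ha hne hl hl'
    obtain ⟨Q, hQ, haQ⟩ := exists_dotProduct_eq_zero hk a
    have hs := card_filter_ne_add_le A {l, l'} (a := a) (by simp [hl, hl'])
    rw [Finset.card_pair hne] at hs
    have h₁ := four_mul_sum_codeWeight A ha
    have h₂ := le_sum_codeWeight_shortened A hA ha hQ haQ
    have h₃ := hA Q hQ
    have h₄ := Nat.mul_le_mul_left (2 ^ k) hs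
    rw [mul_add] at h₄ hr
    rw [mul_left_comm] at hr
    lia
  have hne : ∀ l, A l ≠ 0 := by
    intro l hl
    obtain ⟨l', hl'⟩ := exists_ne_zero A (by lia) hd hA
    exact key (A l') l l' hl' (by rintro rfl; exact hl' hl) (Or.inl hl) rfl
  refine ⟨fun l l' h => ?_, hne⟩
  by_contra hll
  exact key (A l') l l' (hne l') hll (Or.inr h) rfl

/-- In a code attaining the shortened Plotkin bound, every codeword without full support has
minimal weight. -/
lemma codeWeight_le_of_shortened_bound (A : Fin r → Fin k → ZMod 2)
    (hA : ∀ P, P ≠ 0 → d ≤ codeWeight A P) (hr : 2 ^ k * r + 4 * d ≤ 2 ^ k * (2 * d + 1))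
    {l : Fin r} (hl : A l ≠ 0) {Q : Fin k → ZMod 2} (hQ : Q ≠ 0) (hlQ : A l ⬝ᵥ Q = 0) :
    codeWeight A Q ≤ d := by
  have hs := card_filter_ne_add_le A {l} (a := A l) (by simp)
  rw [Finset.card_singleton] at hs
  have h₁ := four_mul_sum_codeWeight A hl
  have h₂ := le_sum_codeWeight_shortened A hA hl hQ hlQ
  have h₄ := Nat.mul_le_mul_left (2 ^ k) hs
  rw [mul_add] at h₄ hr
  rw [mul_left_comm] at hr
  lia

end Coding

section BilinearAlgorithm

variable {K : Type} [Field K] {n m r : ℕ}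

/-- A bilinear algorithm of length `r` for multiplying polynomials of degree at most `n` with
polynomials of degree at most `m`. -/
structure BilinearAlgorithm (K : Type) [Field K] (n m r : ℕ) where
  /-- The linear forms on the first factor. -/
  left : Fin r → K[X] →ₗ[K] K
  /-- The linear forms on the second factor. -/
  right : Fin r → K[X] →ₗ[K] K
  /-- The output vectors. -/
  out : Fin r → K[X]
  mul_eq : ∀ p ∈ degreeLT K (n + 1), ∀ q ∈ degreeLT K (m + 1),
    p * q = ∑ l, left l p • right l q • out l

/-- The pairing of a polynomial with the coefficients of `p` up to degree `n`. -/
noncomputable def coeffPairing (n : ℕ) (p : K[X]) : K[X] →ₗ[K] K :=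
  ∑ i ∈ Finset.range (n + 1), p.coeff i • lcoeff K i

lemma coeffPairing_apply (n : ℕ) (p f : K[X]) :
    coeffPairing n p f = ∑ i ∈ Finset.range (n + 1), p.coeff i * f.coeff i := by
  simp [coeffPairing]

lemma coeffPairing_comm (n : ℕ) (p f : K[X]) : coeffPairing n p f = coeffPairing n f p := by
  simp [coeffPairing_apply, mul_comm]

lemma coeffPairing_X_pow (p : K[X]) {i : ℕ} (hi : i ∈ Finset.range (n + 1)) :
    coeffPairing n p (X ^ i) = p.coeff i := by
  simp only [coeffPairing_apply, coeff_X_pow, mul_ite, mul_one, mul_zero]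
  rw [Finset.sum_ite_eq' (Finset.range (n + 1)) i, if_pos hi]

lemma eq_sum_of_mem_degreeLT {p : K[X]} (hp : p ∈ degreeLT K (n + 1)) :
    p = ∑ i ∈ Finset.range (n + 1), p.coeff i • X ^ i := by
  have := as_sum_range_C_mul_X_pow' p (n := n + 1) ?_
  · simpa only [smul_eq_C_mul] using this
  · rw [mem_degreeLT] at hp
    rw [Nat.lt_succ_iff]
    exact natDegree_le_iff_degree_le.mpr (Order.le_of_lt_succ (by exact_mod_cast hp))

lemma finrank_degreeLT (m : ℕ) : Module.finrank K (degreeLT K m) = m := by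
  simpa using (degreeLTEquiv K m).finrank_eq

/-- A tensor decomposition of the polynomial multiplication tensor is a bilinear algorithm. -/
noncomputable def BilinearAlgorithm.ofTensor {u v w : Fin r → K[X]}
    (h : ∑ l, (u l) ⊗ₜ[K] ((v l) ⊗ₜ[K] (w l))
      = ∑ i ∈ Finset.range (n + 1), ∑ j ∈ Finset.range (m + 1),
          ((X : K[X]) ^ i) ⊗ₜ[K] (((X : K[X]) ^ j) ⊗ₜ[K] ((X : K[X]) ^ (i + j)))) :
    BilinearAlgorithm K n m r where
  left l := coeffPairing n (u l)
  right l := coeffPairing m (v l)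
  out := w
  mul_eq p hp q hq := by
    have := congrArg ((TensorProduct.lid K K[X]).toLinearMap ∘ₗ
      TensorProduct.map (coeffPairing n p) ((TensorProduct.lid K K[X]).toLinearMap ∘ₗ
        TensorProduct.map (coeffPairing m q) LinearMap.id)) h
    simp only [map_sum, LinearMap.comp_apply, LinearEquiv.coe_coe, TensorProduct.map_tmul,
      TensorProduct.lid_tmul, LinearMap.id_apply] at this
    simp_rw [coeffPairing_comm n _ p, coeffPairing_comm m _ q]
    rw [this]
    conv_lhs => rw [eq_sum_of_mem_degreeLT hp, eq_sum_of_mem_degreeLT hq, Finset.sum_mul_sum]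
    refine Finset.sum_congr rfl fun i hi => Finset.sum_congr rfl fun j hj => ?_
    rw [coeffPairing_X_pow p hi, coeffPairing_X_pow q hj, smul_mul_smul_comm, smul_smul, pow_add]

namespace BilinearAlgorithm

variable [DecidableEq K]

/-- The indices of the products in which `p` takes part. -/
noncomputable def support (B : BilinearAlgorithm K n m r) (p : K[X]) : Finset (Fin r) :=
  Finset.univ.filter fun l => B.left l p ≠ 0

/-- The right linear forms of the products in which `p` takes part. -/
noncomputable def rightOn (B : BilinearAlgorithm K n m r) (p : K[X]) :
    degreeLT K (m + 1) →ₗ[K] (B.support p → K) :=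
  LinearMap.pi fun l => B.right l ∘ₗ (degreeLT K (m + 1)).subtype

lemma mul_eq_sum_support (B : BilinearAlgorithm K n m r) {p : K[X]}
    (hp : p ∈ degreeLT K (n + 1)) (q : degreeLT K (m + 1)) :
    p * q = ∑ l : B.support p, B.left l p • B.rightOn p q l • B.out l := by
  rw [B.mul_eq p hp q q.2]
  change _ = ∑ l : B.support p, B.left l p • B.right l q • B.out l
  rw [Finset.sum_coe_sort (B.support p) fun l => B.left l p • B.right l (q : K[X]) • B.out l]
  refine (Finset.sum_subset (Finset.subset_univ _) fun l _ hl => ?_).symm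
  simp only [support, Finset.mem_filter, Finset.mem_univ, true_and, not_not] at hl
  simp [hl]

lemma rightOn_injective (B : BilinearAlgorithm K n m r) {p : K[X]}
    (hp : p ∈ degreeLT K (n + 1)) (hp0 : p ≠ 0) : Function.Injective (B.rightOn p) := by
  rw [← LinearMap.ker_eq_bot, LinearMap.ker_eq_bot']
  intro q hq
  have := B.mul_eq_sum_support hp q
  simpa [hq, hp0] using this

lemma le_card_support (B : BilinearAlgorithm K n m r) {p : K[X]}
    (hp : p ∈ degreeLT K (n + 1)) (hp0 : p ≠ 0) : m + 1 ≤ (B.support p).card := by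
  have := LinearMap.finrank_le_finrank_of_injective (B.rightOn_injective hp hp0)
  simpa [finrank_degreeLT] using this

/-- If `p` takes part in the least possible number of products, then each of their outputs is a
multiple of `p` by a polynomial of degree at most `m`. -/
lemma exists_out_eq_mul (B : BilinearAlgorithm K n m r) {p : K[X]}
    (hp : p ∈ degreeLT K (n + 1)) (hp0 : p ≠ 0) (hcard : (B.support p).card ≤ m + 1)
    {l : Fin r} (hl : B.left l p ≠ 0) :
    ∃ q ∈ degreeLT K (m + 1), q ≠ 0 ∧ B.out l = p * q := by
  have hi := B.rightOn_injective hp hp0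
  have : FiniteDimensional K (degreeLT K (m + 1)) :=
    (degreeLTEquiv K (m + 1)).symm.finiteDimensional
  have hs : Function.Surjective (B.rightOn p) := by
    refine (LinearMap.injective_iff_surjective_of_finrank_eq_finrank ?_).mp hi
    have := B.le_card_support hp hp0
    simp [finrank_degreeLT]
    lia
  have hl' : l ∈ B.support p := by simpa [support] using hl
  obtain ⟨q, hq⟩ := hs (Pi.single ⟨l, hl'⟩ (B.left l p)⁻¹)
  refine ⟨q, q.2, ?_, ?_⟩
  · intro h0
    have : q = 0 := Subtype.ext h0
    rw [this, map_zero] at hq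
    have := congrFun hq ⟨l, hl'⟩
    exact hl (by simpa [eq_comm] using this)
  · rw [B.mul_eq_sum_support hp q, hq, Finset.sum_eq_single ⟨l, hl'⟩]
    · simp [smul_smul, hl]
    · intro l' _ hne
      simp [hne]
    · simp

end BilinearAlgorithm

end BilinearAlgorithm

section LowerBounds

variable {n m r : ℕ}

/-- The polynomial with a given coefficient vector. -/
noncomputable def vecPoly {k : ℕ} (P : Fin k → ZMod 2) : (ZMod 2)[X] :=
  ∑ i, P i • X ^ (i : ℕ)

lemma vecPoly_mem_degreeLT {k : ℕ} (P : Fin k → ZMod 2) : vecPoly P ∈ degreeLT (ZMod 2) k := by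
  refine Submodule.sum_mem _ fun i _ => Submodule.smul_mem _ _ ?_
  rw [mem_degreeLT, degree_X_pow]
  exact_mod_cast i.2

lemma vecPoly_ne_zero {k : ℕ} {P : Fin k → ZMod 2} (hP : P ≠ 0) : vecPoly P ≠ 0 := by
  obtain ⟨i, hi⟩ := Function.ne_iff.mp hP
  refine fun h => hi ?_
  simpa [vecPoly, finsetSum_coeff, coeff_X_pow, Fin.val_inj] using congrArg (coeff · (i : ℕ)) h

namespace BilinearAlgorithm

/-- The columns of the binary code formed by the left linear forms. -/
noncomputable def column (B : BilinearAlgorithm (ZMod 2) n m r) (l : Fin r) :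
    Fin (n + 1) → ZMod 2 :=
  fun i => B.left l (X ^ (i : ℕ))

lemma left_vecPoly (B : BilinearAlgorithm (ZMod 2) n m r) (l : Fin r)
    (P : Fin (n + 1) → ZMod 2) : B.left l (vecPoly P) = B.column l ⬝ᵥ P := by
  simp [vecPoly, column, dotProduct, mul_comm]

lemma card_support_vecPoly (B : BilinearAlgorithm (ZMod 2) n m r) (P : Fin (n + 1) → ZMod 2) :
    (B.support (vecPoly P)).card = codeWeight B.column P := by
  simp only [support, codeWeight, left_vecPoly, zmod_two_ne_zero_iff]

lemma le_codeWeight (B : BilinearAlgorithm (ZMod 2) n m r) (P : Fin (n + 1) → ZMod 2)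
    (hP : P ≠ 0) : m + 1 ≤ codeWeight B.column P := by
  rw [← card_support_vecPoly]
  exact B.le_card_support (vecPoly_mem_degreeLT P) (vecPoly_ne_zero hP)

lemma length_bound (B : BilinearAlgorithm (ZMod 2) n m r) :
    2 * ((2 ^ (n + 1) - 1) * (m + 1)) ≤ 2 ^ (n + 1) * r :=
  plotkin_bound B.column B.le_codeWeight

lemma exists_out_eq_vecPoly_mul (B : BilinearAlgorithm (ZMod 2) n m r) {l : Fin r}
    {P : Fin (n + 1) → ZMod 2} (hl : B.column l ⬝ᵥ P = 1)
    (hP : codeWeight B.column P ≤ m + 1) :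
    ∃ q ∈ degreeLT (ZMod 2) (m + 1), q ≠ 0 ∧ B.out l = vecPoly P * q := by
  have hP0 : P ≠ 0 := by
    rintro rfl
    simp at hl
  refine B.exists_out_eq_mul (vecPoly_mem_degreeLT P) (vecPoly_ne_zero hP0) ?_ ?_
  · rwa [card_support_vecPoly]
  · rw [left_vecPoly, hl]
    exact one_ne_zero

/-- An output cannot be shared by three pairwise coprime polynomials of minimal weight and large
degree. -/
lemma natDegree_add_le (B : BilinearAlgorithm (ZMod 2) n m r) {l : Fin r}
    {P Q S : Fin (n + 1) → ZMod 2}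
    (hPl : B.column l ⬝ᵥ P = 1) (hP : codeWeight B.column P ≤ m + 1)
    (hQl : B.column l ⬝ᵥ Q = 1) (hQ : codeWeight B.column Q ≤ m + 1)
    (hSl : B.column l ⬝ᵥ S = 1) (hS : codeWeight B.column S ≤ m + 1)
    (hPQ : IsCoprime (vecPoly P) (vecPoly Q)) (hPS : IsCoprime (vecPoly P) (vecPoly S))
    (hQS : IsCoprime (vecPoly Q) (vecPoly S)) :
    (vecPoly Q).natDegree + (vecPoly S).natDegree ≤ m := by
  obtain ⟨p, hpd, hp0, hp⟩ := B.exists_out_eq_vecPoly_mul hPl hP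
  obtain ⟨q, -, hq0, hq⟩ := B.exists_out_eq_vecPoly_mul hQl hQ
  obtain ⟨s, -, hs0, hs⟩ := B.exists_out_eq_vecPoly_mul hSl hS
  have hQp : vecPoly Q ∣ p := hPQ.symm.dvd_of_dvd_mul_left ⟨q, hp.symm.trans hq⟩
  have hSp : vecPoly S ∣ p := hPS.symm.dvd_of_dvd_mul_left ⟨s, hp.symm.trans hs⟩
  have hdvd := hQS.mul_dvd hQp hSp
  have hne : vecPoly Q * vecPoly S ≠ 0 := ne_zero_of_dvd_ne_zero hp0 hdvd
  rw [← natDegree_mul (left_ne_zero_of_mul hne) (right_ne_zero_of_mul hne)]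
  refine (natDegree_le_of_dvd hdvd hp0).trans ?_
  rw [mem_degreeLT] at hpd
  exact natDegree_le_iff_degree_le.mpr (Order.le_of_lt_succ (by exact_mod_cast hpd))

end BilinearAlgorithm

lemma card_ne_zero (k : ℕ) :
    (Finset.univ.filter fun a : Fin k → ZMod 2 => a ≠ 0).card = 2 ^ k - 1 := by
  rw [Finset.filter_ne', Finset.card_erase_of_mem (Finset.mem_univ _)]
  simp

lemma le_length_two_four (B : BilinearAlgorithm (ZMod 2) 2 4 r) : 10 ≤ r := by
  have hb := B.length_bound
  by_contra! hr
  obtain rfl : r = 9 := by lia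
  obtain ⟨hinj, hne⟩ := injective_and_ne_zero_of_shortened_bound B.column (by norm_num)
    (by norm_num) B.le_codeWeight (by norm_num)
  have := Finset.card_le_card_of_injOn (s := Finset.univ) B.column
    (t := Finset.univ.filter fun a => a ≠ 0) (by simpa [Set.MapsTo] using hne) hinj.injOn
  rw [card_ne_zero] at this
  simp at this

/-- An injective family of columns whose length is the size of `t` takes every value in `t`. -/
lemma exists_eq_of_injective {k : ℕ} {A : Fin r → Fin k → ZMod 2} (hinj : Function.Injective A)
    {t : Finset (Fin k → ZMod 2)} (ht : ∀ l, A l ∈ t) (hcard : t.card ≤ r)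
    {a : Fin k → ZMod 2} (ha : a ∈ t) : ∃ l, A l = a := by
  have := Finset.surjOn_of_injOn_of_card_le (s := Finset.univ) A (t := t)
    (fun l _ => ht l) hinj.injOn (by simpa using hcard)
  obtain ⟨l, -, hl⟩ := this ha
  exact ⟨l, hl⟩

lemma le_length_two_three (B : BilinearAlgorithm (ZMod 2) 2 3 r) : 8 ≤ r := by
  have hb := B.length_bound
  by_contra! hr
  obtain rfl : r = 7 := by lia
  obtain ⟨hinj, hne⟩ := injective_and_ne_zero_of_shortened_bound B.column (by norm_num)
    (by norm_num) B.le_codeWeight (by norm_num)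
  have hsurj : ∀ a, a ≠ 0 → ∃ l, B.column l = a := fun a ha =>
    exists_eq_of_injective hinj (t := Finset.univ.filter fun a => a ≠ 0) (by simpa using hne)
      (by rw [card_ne_zero]; norm_num) (by simpa using ha)
  have hw : ∀ P, P ≠ 0 → codeWeight B.column P ≤ 4 := by
    intro P hP
    have key : ∀ P : Fin 3 → ZMod 2, ∃ a, a ≠ 0 ∧ a ⬝ᵥ P = 0 := by decide
    obtain ⟨a, ha, haP⟩ := key P
    obtain ⟨l, rfl⟩ := hsurj a ha
    exact codeWeight_le_of_shortened_bound B.column B.le_codeWeight (by norm_num) ha hP haP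
  obtain ⟨l, hl⟩ := hsurj ![1, 1, 1] (by decide)
  have h1 : vecPoly ![1, 0, 0] = 1 := by simp [vecPoly, Fin.sum_univ_succ]
  have h2 : vecPoly ![0, 0, 1] = X ^ 2 := by simp [vecPoly, Fin.sum_univ_succ]
  have h3 : vecPoly ![1, 1, 1] = X ^ 2 + X + 1 := by
    simp [vecPoly, Fin.sum_univ_succ]
    ring
  have hd : (X ^ 2 + X + 1 : (ZMod 2)[X]).natDegree = 2 := by compute_degree!
  have hc : IsCoprime (X ^ 2 : (ZMod 2)[X]) (X ^ 2 + X + 1) :=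
    IsCoprime.pow_left ⟨-(X + 1), 1, by ring⟩
  have := B.natDegree_add_le (l := l) (P := ![1, 0, 0]) (Q := ![0, 0, 1]) (S := ![1, 1, 1])
    (by rw [hl]; decide) (hw _ (by decide)) (by rw [hl]; decide) (hw _ (by decide))
    (by rw [hl]; decide) (hw _ (by decide))
    (by rw [h1]; exact isCoprime_one_left) (by rw [h1]; exact isCoprime_one_left)
    (by rwa [h2, h3])
  rw [h2, h3, hd, natDegree_X_pow] at this
  lia

/-- The coefficient vectors of `1`, `X ^ 3`, `X ^ 3 + X + 1` and `X ^ 3 + X ^ 2 + 1`, which as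
binary cubic forms are pairwise coprime. -/
def coprimeCubics : Fin 4 → Fin 4 → ZMod 2 :=
  ![![1, 0, 0, 0], ![0, 0, 0, 1], ![1, 1, 0, 1], ![1, 0, 1, 1]]

lemma vecPoly_coprimeCubics :
    (fun i => vecPoly (coprimeCubics i)) =
      ![1, X ^ 3, X ^ 3 + X + 1, X ^ 3 + X ^ 2 + 1] := by
  funext i
  fin_cases i <;> simp [vecPoly, coprimeCubics, Fin.sum_univ_succ] <;> ring

lemma isCoprime_coprimeCubics {i j : Fin 4} (hij : i < j) :
    IsCoprime (vecPoly (coprimeCubics i)) (vecPoly (coprimeCubics j)) := by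
  have h2 : (2 : (ZMod 2)[X]) = 0 := CharTwo.two_eq_zero
  have h12 : IsCoprime (X ^ 3 : (ZMod 2)[X]) (X ^ 3 + X + 1) :=
    IsCoprime.pow_left ⟨-(X ^ 2 + 1), 1, by ring⟩
  have h13 : IsCoprime (X ^ 3 : (ZMod 2)[X]) (X ^ 3 + X ^ 2 + 1) :=
    IsCoprime.pow_left ⟨-(X ^ 2 + X), 1, by ring⟩
  have h23 : IsCoprime (X ^ 3 + X + 1 : (ZMod 2)[X]) (X ^ 3 + X ^ 2 + 1) :=
    ⟨X, X + 1, by linear_combination (X ^ 4 + X ^ 3 + X ^ 2 + X) * h2⟩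
  have hi := congrFun vecPoly_coprimeCubics i
  have hj := congrFun vecPoly_coprimeCubics j
  rw [hi, hj]
  fin_cases i <;> fin_cases j <;> first
    | exact absurd hij (by decide)
    | simp [isCoprime_one_left, h12, h13, h23]

lemma natDegree_coprimeCubics {i : Fin 4} (hi : 0 < i) :
    (vecPoly (coprimeCubics i)).natDegree = 3 := by
  have h := congrFun vecPoly_coprimeCubics i
  rw [h]
  fin_cases i
  · exact absurd hi (by decide)
  · exact natDegree_X_pow 3
  · change (X ^ 3 + X + 1 : (ZMod 2)[X]).natDegree = 3
    compute_degree!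
  · change (X ^ 3 + X ^ 2 + 1 : (ZMod 2)[X]).natDegree = 3
    compute_degree!

lemma exists_dotProduct_coprimeCubics : ∀ P : Fin 4 → ZMod 2, P ≠ 0 →
    ∃ a, a ⬝ᵥ P = 1 ∧ ∃ i j s : Fin 4, i < j ∧ j < s ∧
      (a ⬝ᵥ coprimeCubics i = 1 ∧ coprimeCubics i ≠ P) ∧
      (a ⬝ᵥ coprimeCubics j = 1 ∧ coprimeCubics j ≠ P) ∧
      (a ⬝ᵥ coprimeCubics s = 1 ∧ coprimeCubics s ≠ P) := by
  decide +kernel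

lemma le_length_three_three (B : BilinearAlgorithm (ZMod 2) 3 3 r) : 9 ≤ r := by
  have hb := B.length_bound
  by_contra! hr
  obtain rfl : r = 8 := by lia
  obtain ⟨hinj, hne⟩ := injective_and_ne_zero_of_shortened_bound B.column (by norm_num)
    (by norm_num) B.le_codeWeight (by norm_num)
  have hfull : ∀ P, P ≠ 0 → ¬ codeWeight B.column P ≤ 4 → ∀ l, B.column l ⬝ᵥ P = 1 := by
    intro P hP hw l
    rw [← zmod_two_ne_zero_iff]
    exact fun hl => hw <| codeWeight_le_of_shortened_bound B.column B.le_codeWeight (by norm_num)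
      (hne l) hP hl
  obtain ⟨P₀, hP₀, hw₀⟩ : ∃ P, P ≠ 0 ∧ ¬ codeWeight B.column P ≤ 4 := by
    by_contra! h
    have hsum := two_mul_sum_codeWeight B.column hne
    rw [← Finset.add_sum_erase _ _ (Finset.mem_univ 0)] at hsum
    have hle := Finset.sum_le_card_nsmul (Finset.univ.erase (0 : Fin 4 → ZMod 2))
      (codeWeight B.column) 4 fun P hP => h P (Finset.ne_of_mem_erase hP)
    rw [Finset.card_erase_of_mem (Finset.mem_univ _)] at hle
    have h0 : codeWeight B.column 0 = 0 := by simp [codeWeight]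
    simp at hle
    lia
  have hw : ∀ P, P ≠ 0 → P ≠ P₀ → codeWeight B.column P ≤ 4 := by
    intro P hP hne₀
    by_contra h
    have hle := B.le_codeWeight (P - P₀) (sub_ne_zero.mpr hne₀)
    simp [codeWeight, dotProduct_sub, hfull P hP h, hfull P₀ hP₀ hw₀] at hle
  obtain ⟨a, ha, i, j, s, hij, hjs, ⟨hi, hi₀⟩, ⟨hj, hj₀⟩, ⟨hs, hs₀⟩⟩ :=
    exists_dotProduct_coprimeCubics P₀ hP₀
  have hcard := two_mul_card_dotProduct_eq_one hP₀
  obtain ⟨l, rfl⟩ := exists_eq_of_injective hinj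
    (t := Finset.univ.filter fun a => P₀ ⬝ᵥ a = 1)
    (by simpa [dotProduct_comm P₀] using hfull P₀ hP₀ hw₀) (by lia)
    (a := a) (by simpa [dotProduct_comm P₀] using ha)
  have hcub : ∀ i, coprimeCubics i ≠ 0 := by decide
  have := B.natDegree_add_le hi (hw _ (hcub i) hi₀) hj (hw _ (hcub j) hj₀)
    hs (hw _ (hcub s) hs₀) (isCoprime_coprimeCubics hij)
    (isCoprime_coprimeCubics (hij.trans hjs)) (isCoprime_coprimeCubics hjs)
  have hj0 : 0 < j := lt_of_le_of_lt (Fin.zero_le i) hij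
  rw [natDegree_coprimeCubics hj0, natDegree_coprimeCubics (hj0.trans hjs)] at this
  lia

end LowerBounds

section Moves

/-- A triple of polynomials over `ZMod 2`, each encoded by the bits of a natural number. -/
abbrev Code := ℕ × ℕ × ℕ

/-- The polynomial of degree less than `8` whose coefficients are the bits of `a`. -/
noncomputable def bitPoly (a : ℕ) : (ZMod 2)[X] :=
  ∑ i ∈ Finset.range 8, if a.testBit i then X ^ i else 0

lemma bitPoly_xor (a b : ℕ) : bitPoly (a ^^^ b) = bitPoly a + bitPoly b := by
  rw [bitPoly, bitPoly, bitPoly, ← Finset.sum_add_distrib]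
  refine Finset.sum_congr rfl fun i _ => ?_
  rw [Nat.testBit_xor]
  cases a.testBit i <;> cases b.testBit i <;> simp [CharTwo.add_self_eq_zero]

lemma bitPoly_two_pow {i : ℕ} (hi : i < 8) : bitPoly (2 ^ i) = X ^ i := by
  simp [bitPoly, Nat.testBit_two_pow, hi]

lemma degree_bitPoly_le {a n : ℕ} (ha : a < 2 ^ (n + 1)) : (bitPoly a).degree ≤ n := by
  refine (degree_sum_le _ _).trans (Finset.sup_le fun i _ => ?_)
  split_ifs with h
  · rw [degree_X_pow]
    by_contra! hi
    have hi' : n + 1 ≤ i := by exact_mod_cast hi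
    rw [Nat.testBit_lt_two_pow (ha.trans_le (Nat.pow_le_pow_right two_pos hi'))] at h
    exact absurd h (by simp)
  · simp

/-- The triple of polynomials encoded by `t`. -/
noncomputable def Code.triple (t : Code) : Triple (ZMod 2) :=
  (bitPoly t.1, bitPoly t.2.1, bitPoly t.2.2)

/-- The representation encoded by a list. -/
noncomputable def repOf (S : List Code) : Multiset (Triple (ZMod 2)) :=
  (S : Multiset Code).map Code.triple

/-- A flip or reduction over `ZMod 2`, given by the two triples it acts on. The arguments list
the shared components first. -/
inductive Move
  | flipFst (u v₁ w₁ v₂ w₂ : ℕ)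
  | flipSnd (v u₁ w₁ u₂ w₂ : ℕ)
  | flipThd (w u₁ v₁ u₂ v₂ : ℕ)
  | reduceFst (v w u₁ u₂ : ℕ)
  | reduceSnd (u w v₁ v₂ : ℕ)
  | reduceThd (u v w₁ w₂ : ℕ)

/-- The two triples a move acts on. -/
def Move.source : Move → Code × Code
  | flipFst u v₁ w₁ v₂ w₂ => ((u, v₁, w₁), (u, v₂, w₂))
  | flipSnd v u₁ w₁ u₂ w₂ => ((u₁, v, w₁), (u₂, v, w₂))
  | flipThd w u₁ v₁ u₂ v₂ => ((u₁, v₁, w), (u₂, v₂, w))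
  | reduceFst v w u₁ u₂ => ((u₁, v, w), (u₂, v, w))
  | reduceSnd u w v₁ v₂ => ((u, v₁, w), (u, v₂, w))
  | reduceThd u v w₁ w₂ => ((u, v, w₁), (u, v, w₂))

/-- The triples a move produces. -/
def Move.target : Move → List Code
  | flipFst u v₁ w₁ v₂ w₂ => [(u, v₁ ^^^ v₂, w₁), (u, v₂, w₂ ^^^ w₁)]
  | flipSnd v u₁ w₁ u₂ w₂ => [(u₁ ^^^ u₂, v, w₁), (u₂, v, w₂ ^^^ w₁)]
  | flipThd w u₁ v₁ u₂ v₂ => [(u₁ ^^^ u₂, v₁, w), (u₂, v₂ ^^^ v₁, w)]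
  | reduceFst v w u₁ u₂ => [(u₁ ^^^ u₂, v, w)]
  | reduceSnd u w v₁ v₂ => [(u, v₁ ^^^ v₂, w)]
  | reduceThd u v w₁ w₂ => [(u, v, w₁ ^^^ w₂)]

/-- Carry out a list of moves, failing if a move acts on triples that are not present. -/
def runMoves : List Move → List Code → Option (List Code)
  | [], S => some S
  | μ :: ms, S =>
    if μ.source.1 ∈ S ∧ μ.source.2 ∈ S.erase μ.source.1 then
      runMoves ms (μ.target ++ (S.erase μ.source.1).erase μ.source.2)
    else none

lemma isFlip_or_isReduction (μ : Move) (T : List Code) :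
    IsFlip (ZMod 2) (repOf (μ.source.1 :: μ.source.2 :: T)) (repOf (μ.target ++ T)) ∨
      IsReduction (ZMod 2) (repOf (μ.source.1 :: μ.source.2 :: T)) (repOf (μ.target ++ T)) := by
  cases μ with
  | flipFst => exact Or.inl ⟨repOf T, 1, Or.inl ⟨_, _, _, _, _, rfl, by
      simp [Move.source, Move.target, repOf, Code.triple, bitPoly_xor, CharTwo.sub_eq_add]⟩⟩
  | flipSnd => exact Or.inl ⟨repOf T, 1, Or.inr (Or.inl ⟨_, _, _, _, _, rfl, by
      simp [Move.source, Move.target, repOf, Code.triple, bitPoly_xor, CharTwo.sub_eq_add]⟩)⟩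
  | flipThd => exact Or.inl ⟨repOf T, 1, Or.inr (Or.inr ⟨_, _, _, _, _, rfl, by
      simp [Move.source, Move.target, repOf, Code.triple, bitPoly_xor, CharTwo.sub_eq_add]⟩)⟩
  | reduceFst => exact Or.inr ⟨repOf T, Or.inl ⟨_, _, _, _, rfl, by
      simp [Move.source, Move.target, repOf, Code.triple, bitPoly_xor]⟩⟩
  | reduceSnd => exact Or.inr ⟨repOf T, Or.inr (Or.inl ⟨_, _, _, _, rfl, by
      simp [Move.source, Move.target, repOf, Code.triple, bitPoly_xor]⟩)⟩
  | reduceThd => exact Or.inr ⟨repOf T, Or.inr (Or.inr ⟨_, _, _, _, rfl, by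
      simp [Move.source, Move.target, repOf, Code.triple, bitPoly_xor]⟩)⟩

lemma exists_path_of_runMoves {ms : List Move} {S R : List Code} (h : runMoves ms S = some R) :
    ∃ f r, Path (ZMod 2) (repOf S) (repOf R) f r := by
  induction ms generalizing S with
  | nil =>
    obtain rfl : S = R := by simpa [runMoves] using h
    exact ⟨0, 0, Path.refl _⟩
  | cons μ ms ih =>
    rw [runMoves] at h
    split_ifs at h with hmem
    obtain ⟨f, r, hpath⟩ := ih h
    have hperm : repOf S =
        repOf (μ.source.1 :: μ.source.2 :: (S.erase μ.source.1).erase μ.source.2) := by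
      refine congrArg (Multiset.map Code.triple) (Multiset.coe_eq_coe.mpr ?_)
      exact (List.perm_cons_erase hmem.1).trans ((List.perm_cons_erase hmem.2).cons _)
    rw [hperm]
    rcases isFlip_or_isReduction μ ((S.erase μ.source.1).erase μ.source.2) with hμ | hμ
    · exact ⟨_, _, Path.flip hμ hpath⟩
    · exact ⟨_, _, Path.reduce hμ hpath⟩

/-- The Karatsuba trick: two flips and a reduction turn the four products of `u₁, u₂` with
`v₁, v₂` into three, provided the two mixed products share their output `w`. -/
def karatsuba (u₁ u₂ v₁ v₂ w₁ w w₂ : ℕ) : List Move :=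
  [.flipFst u₁ v₂ w v₁ w₁, .flipFst u₂ v₁ w v₂ w₂, .reduceFst (v₂ ^^^ v₁) w u₁ u₂]

/-- The standard representation as a list of codes. -/
def stdCode (n m : ℕ) : List Code :=
  (List.range (n + 1) ×ˢ List.range (m + 1)).map fun p => (2 ^ p.1, 2 ^ p.2, 2 ^ (p.1 + p.2))

lemma repOf_stdCode {n m : ℕ} (h : n + m < 8) : repOf (stdCode n m) = stdRep (ZMod 2) n m := by
  rw [repOf, stdCode, stdRep, ← Multiset.map_coe, Multiset.map_map, Finset.product_val,
    ← Multiset.coe_product]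
  refine Multiset.map_congr rfl fun p hp => ?_
  have hp' := Multiset.mem_product.mp hp
  simp only [Finset.range_val, Multiset.mem_range] at hp'
  simp only [Function.comp_apply, Code.triple]
  rw [bitPoly_two_pow (by lia), bitPoly_two_pow (by lia), bitPoly_two_pow (by lia)]

end Moves

section Invariance

variable {K : Type} [Field K]

lemma tensorOfRep_cons (t : Triple K) (S : Multiset (Triple K)) :
    tensorOfRep K (t ::ₘ S) = tensorOf K t + tensorOfRep K S := by
  simp [tensorOfRep]

lemma IsFlip.tensorOfRep_eq {S S' : Multiset (Triple K)} (h : IsFlip K S S') :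
    tensorOfRep K S = tensorOfRep K S' := by
  obtain ⟨T, l, ⟨_, _, _, _, _, rfl, rfl⟩ | ⟨_, _, _, _, _, rfl, rfl⟩ |
    ⟨_, _, _, _, _, rfl, rfl⟩⟩ := h <;>
  · simp only [tensorOfRep_cons, tensorOf, tmul_add, tmul_sub, sub_tmul, add_tmul, ← smul_tmul',
      tmul_smul]
    abel

lemma IsReduction.tensorOfRep_eq {S S' : Multiset (Triple K)} (h : IsReduction K S S') :
    tensorOfRep K S = tensorOfRep K S' := by
  obtain ⟨T, ⟨_, _, _, _, rfl, rfl⟩ | ⟨_, _, _, _, rfl, rfl⟩ | ⟨_, _, _, _, rfl, rfl⟩⟩ := h <;>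
  · simp only [tensorOfRep_cons, tensorOf, tmul_add, add_tmul]
    abel

/-- The represented tensor is constant along paths of the flip graph. -/
lemma Path.tensorOfRep_eq {S S' : Multiset (Triple K)} {f r : ℕ} (h : Path K S S' f r) :
    tensorOfRep K S = tensorOfRep K S' := by
  induction h with
  | refl => rfl
  | rescale h _ ih => exact (congrArg Multiset.sum h).trans ih
  | flip h _ ih => exact h.tensorOfRep_eq.trans ih
  | reduce h _ ih => exact h.tensorOfRep_eq.trans ih

end Invariance

/-- A certified sequence of moves reaching the length of a lower bound for all bilinear
algorithms ends in an optimal representation. -/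
lemma exists_path_card_eq_polyMulRank {n m : ℕ} (hnm : n + m < 8) (L : ℕ) (ms : List Move)
    (hrun : (runMoves ms (stdCode n m)).any fun R => R.length = L ∧
      ∀ t ∈ R, t.1 < 2 ^ (n + 1) ∧ t.2.1 < 2 ^ (m + 1) ∧ t.2.2 < 2 ^ (n + m + 1))
    (hlb : ∀ r, BilinearAlgorithm (ZMod 2) n m r → L ≤ r) :
    ∃ (R : Multiset (Triple (ZMod 2))) (f r : ℕ),
      Path (ZMod 2) (stdRep (ZMod 2) n m) R f r ∧
      Multiset.card R = polyMulRank (ZMod 2) n m := by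
  rw [Option.any_eq_true] at hrun
  obtain ⟨R, hR, hcheck⟩ := hrun
  obtain ⟨rfl, hdeg⟩ := of_decide_eq_true hcheck
  obtain ⟨f, r, hpath⟩ := exists_path_of_runMoves hR
  rw [repOf_stdCode hnm] at hpath
  refine ⟨repOf R, f, r, hpath, ?_⟩
  have hcard : Multiset.card (repOf R) = R.length := by simp [repOf]
  rw [hcard]
  have hmem : R.length ∈ {r : ℕ | ∃ u v w : Fin r → (ZMod 2)[X],
      (∀ l, (u l).degree ≤ (n : ℕ)) ∧ (∀ l, (v l).degree ≤ (m : ℕ)) ∧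
      (∀ l, (w l).degree ≤ ((n + m : ℕ))) ∧
      ∑ l, (u l) ⊗ₜ[ZMod 2] ((v l) ⊗ₜ[ZMod 2] (w l))
        = ∑ i ∈ Finset.range (n + 1), ∑ j ∈ Finset.range (m + 1),
            ((X : (ZMod 2)[X]) ^ i) ⊗ₜ[ZMod 2]
              (((X : (ZMod 2)[X]) ^ j) ⊗ₜ[ZMod 2] ((X : (ZMod 2)[X]) ^ (i + j)))} := by
    have hRdeg := fun l : Fin R.length => hdeg (R.get l) (List.get_mem R l)
    refine ⟨fun l => bitPoly (R.get l).1, fun l => bitPoly (R.get l).2.1,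
      fun l => bitPoly (R.get l).2.2, fun l => degree_bitPoly_le (hRdeg l).1,
      fun l => degree_bitPoly_le (hRdeg l).2.1, fun l => degree_bitPoly_le (hRdeg l).2.2, ?_⟩
    have hstd : tensorOfRep (ZMod 2) (stdRep (ZMod 2) n m) =
        ∑ i ∈ Finset.range (n + 1), ∑ j ∈ Finset.range (m + 1),
            ((X : (ZMod 2)[X]) ^ i) ⊗ₜ[ZMod 2]
              (((X : (ZMod 2)[X]) ^ j) ⊗ₜ[ZMod 2] ((X : (ZMod 2)[X]) ^ (i + j))) := by
      rw [← Finset.sum_product', tensorOfRep, stdRep, Multiset.map_map]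
      rfl
    rw [← hstd, hpath.tensorOfRep_eq]
    change ∑ l : Fin R.length, tensorOf (ZMod 2) (Code.triple (R.get l)) = _
    rw [tensorOfRep, repOf, Multiset.map_map, Multiset.map_coe, Multiset.sum_coe]
    exact Fin.sum_univ_fun_getElem R (tensorOf (ZMod 2) ∘ Code.triple)
  refine le_antisymm (le_csInf ⟨_, hmem⟩ ?_) (Nat.sInf_le hmem)
  rintro r ⟨u, v, w, -, -, -, h⟩
  exact hlb r (BilinearAlgorithm.ofTensor h)

end FlipGraph

/-- Over the field `ℤ/2` with two elements, for every
`(n,m) ∈ {(1,1),(1,2),(1,3),(1,4),(1,5),(2,2),(2,3),(2,4),(3,3)}` the flip graph of the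
polynomial multiplication tensor `T_{n,m}` has a path (consisting of flips and reductions)
from the standard representation to a representation whose length equals the rank of
`T_{n,m}` over `ℤ/2`. -/
theorem path_to_optimal_rep_zmod_two :
    ∀ p : ℕ × ℕ,
      p ∈ ([(1,1),(1,2),(1,3),(1,4),(1,5),(2,2),(2,3),(2,4),(3,3)] : List (ℕ × ℕ)) →
      ∃ (R : Multiset (Triple (ZMod 2))) (f r : ℕ),
        Path (ZMod 2) (stdRep (ZMod 2) p.1 p.2) R f r ∧
        Multiset.card R = polyMulRank (ZMod 2) p.1 p.2 := by
  have hbound {n m r : ℕ} (B : BilinearAlgorithm (ZMod 2) n m r) := B.length_bound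
  intro p hp
  fin_cases hp
  · exact exists_path_card_eq_polyMulRank (by norm_num) 3 (karatsuba 1 2 1 2 1 2 4)
      (by decide +kernel) fun r B => by have := hbound B; lia
  · exact exists_path_card_eq_polyMulRank (by norm_num) 5 (karatsuba 1 2 1 2 1 2 4)
      (by decide +kernel) fun r B => by have := hbound B; lia
  · exact exists_path_card_eq_polyMulRank (by norm_num) 6
      (karatsuba 1 2 1 2 1 2 4 ++ karatsuba 1 2 4 8 4 8 16)
      (by decide +kernel) fun r B => by have := hbound B; lia
  · exact exists_path_card_eq_polyMulRank (by norm_num) 8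
      (karatsuba 1 2 1 2 1 2 4 ++ karatsuba 1 2 4 8 4 8 16)
      (by decide +kernel) fun r B => by have := hbound B; lia
  · exact exists_path_card_eq_polyMulRank (by norm_num) 9
      (karatsuba 1 2 1 2 1 2 4 ++ karatsuba 1 2 4 8 4 8 16 ++ karatsuba 1 2 16 32 16 32 64)
      (by decide +kernel) fun r B => by have := hbound B; lia
  · exact exists_path_card_eq_polyMulRank (by norm_num) 6
      (karatsuba 1 2 1 2 1 2 4 ++ karatsuba 1 4 1 4 3 4 16 ++ karatsuba 2 4 2 4 6 8 20)
      (by decide +kernel) fun r B => by have := hbound B; lia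
  · exact exists_path_card_eq_polyMulRank (by norm_num) 8
      (karatsuba 1 2 1 2 1 2 4 ++ karatsuba 1 2 4 8 4 8 16 ++
        [.flipFst 4 2 8 1 4, .flipFst 4 8 32 4 16] ++
        karatsuba 1 4 1 4 3 12 48 ++ karatsuba 3 4 3 12 2 8 32)
      (by decide +kernel) fun r B => le_length_two_three B
  · exact exists_path_card_eq_polyMulRank (by norm_num) 10
      [.flipFst 4 2 8 4 16, .flipSnd 2 1 2 2 4, .flipSnd 4 2 8 1 4, .flipSnd 16 1 16 2 32,
        .flipThd 2 2 1 3 2, .reduceThd 1 1 1 2, .flipFst 4 16 64 4 24, .flipSnd 8 4 32 2 16,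
        .reduceSnd 2 48 8 16, .flipFst 4 6 8 1 4, .flipFst 1 1 3 4 12, .flipFst 4 1 12 4 88,
        .flipSnd 8 1 8 6 32, .flipThd 8 3 4 4 7, .reduceSnd 7 8 8 4, .flipFst 1 4 15 5 3,
        .reduceFst 5 12 1 4, .flipThd 8 4 3 7 12, .reduceThd 3 3 2 8]
      (by decide +kernel) fun r B => le_length_two_four B
  · exact exists_path_card_eq_polyMulRank (by norm_num) 9
      (karatsuba 1 2 1 2 1 2 4 ++ karatsuba 1 2 4 8 4 8 16 ++
        karatsuba 4 8 1 2 4 8 16 ++ karatsuba 4 8 4 8 16 32 64 ++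
        karatsuba 1 4 1 4 3 12 48 ++ karatsuba 2 8 2 8 6 24 96 ++ karatsuba 3 12 3 12 2 8 32)
      (by decide +kernel) fun r B => le_length_three_three B
end
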